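/- arXiv:2605.15992 — 2 statements merged into one kernel-verified Lean document; each statement's English description precedes it below -/
import Mathlib

section
/- Let S be a polynomial ring over a field k, let x be a linear form and q, q' quadrics in S such that x, q, q' is a regular sequence, and let I ⊆ (x, q, q') be a homogeneous ideal of height 3 generated by n quadrics. Then pd_S(S/I) ≤ n. -/
open CategoryTheory Opposite

universe u

/-- The height of an ideal: the infimum of the heights (in the prime spectrum,
ordered by inclusion) of the primes containing it. -/
noncomputable def Ideal.heightENat {R : Type u} [CommRing R] (I : Ideal R) : ℕ∞ :=
  ⨅ (p : PrimeSpectrum R) (_ : I ≤ p.asIdeal), Order.height p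

/-- The projective dimension of an `R`-module `M`: the least `n` such that
`Ext^i(M, N) = 0` for all `i > n` and all modules `N` (and `⊤` if no such `n` exists). -/
noncomputable def projDim (R : Type u) [CommRing R] (M : Type u) [AddCommGroup M]
    [Module R M] : ℕ∞ :=
  sInf ((↑) '' {n : ℕ | ∀ i : ℕ, n < i → ∀ N : ModuleCat.{u} R,
    Subsingleton (((Ext R (ModuleCat.{u} R) i).obj (op (ModuleCat.of R M))).obj N)})

/-- The Hilbert function of the standard graded ring `S/J`, where
`S = k[x_1, ..., x_N]`: the `k`-dimension of the degree-`d` graded piece of `S/J`. -/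
noncomputable def hilbertFunction (k : Type u) [Field k] {N : ℕ}
    (J : Ideal (MvPolynomial (Fin N) k)) (d : ℕ) : ℕ :=
  Module.finrank k (Submodule.map (Ideal.Quotient.mkₐ k J).toLinearMap
    (MvPolynomial.homogeneousSubmodule (Fin N) k d))

open scoped Classical in
/-- The Hilbert–Samuel multiplicity `e(S/J)` of the graded ring `S/J`:
`(deg P)!` times the leading coefficient of the Hilbert polynomial `P` of `S/J`,
i.e. of the polynomial agreeing with the Hilbert function in all large degrees
(the degree of the Hilbert polynomial being `dim(S/J) - 1`). -/
noncomputable def hilbertSamuelMultiplicity (k : Type u) [Field k] {N : ℕ}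
    (J : Ideal (MvPolynomial (Fin N) k)) : ℚ :=
  if h : ∃ P : Polynomial ℚ, ∀ᶠ d : ℕ in Filter.atTop,
      (hilbertFunction k J d : ℚ) = P.eval (d : ℚ)
  then (h.choose.natDegree).factorial * h.choose.leadingCoeff
  else 0

/-!
Write `f m = l m * x + a m * q + b m * q'` with linear forms `l m` and scalars `a m`, `b m`.
If all the vectors `(a m, b m)` were proportional, `I` would lie in an ideal `(x, g)` of height
at most two. So two of them, say for `f i` and `f j`, form a basis of the plane, and Cramer's rule
gives `I = J + x * L`, where `J = (f i, f j)` and `L` is generated by `n - 2` linear forms.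
Since `x, f i, f j` again generates `(x, q, q')`, its first Koszul homology vanishes and `x` is a
nonzerodivisor modulo `J`. Hence `I : x = J + L` and `I + (x) = J + (x)`, and the exact sequence
`0 → S/(I : x) → S/I → S/(I + (x)) → 0` bounds `pd S/I` by the projective dimensions of the two
outer terms. In both of them `J` is added to an ideal of linear forms, whose quotient is a
polynomial ring. Over a unique factorization domain two generators `c * a'`, `c * b'` with `a'`,
`b'` relatively prime raise the projective dimension by at most two, because `(c * a', c * b')` is
again of the form `J + x * L`, with `J = 0`, `x = c` and `L = (a', b')`.
-/

universe v

section ProjectiveDimension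

variable {R : Type u} [CommRing R]

lemma projDim_le_of_hasProjectiveDimensionLE {M : Type u} [AddCommGroup M] [Module R M] {n : ℕ}
    (h : HasProjectiveDimensionLE (ModuleCat.of R M) n) : projDim R M ≤ n := by
  refine sInf_le ⟨n, fun i hi N ↦ ?_, rfl⟩
  obtain ⟨j, rfl⟩ : ∃ j, i = j + 1 := ⟨i - 1, by omega⟩
  -- A cocycle on a projective resolution represents a class in `Abelian.Ext`, which vanishes.
  let P : ProjectiveResolution (ModuleCat.of R M) := ProjectiveResolution.of _
  suffices Limits.IsZero (((Ext R (ModuleCat.{u} R) (j + 1)).obj (op (ModuleCat.of R M))).obj N)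
    from ModuleCat.subsingleton_of_isZero this
  refine .of_iso ?_ (P.isoExt (j + 1) N)
  rw [← HomologicalComplex.exactAt_iff_isZero_homology,
    HomologicalComplex.exactAt_iff' _ j (j + 1) (j + 2) (by simp) (by simp),
    ShortComplex.moduleCat_exact_iff]
  intro (z : P.complex.X (j + 1) ⟶ N) (hz : P.complex.d (j + 2) (j + 1) ≫ z = 0)
  have hclass : P.extMk z (j + 2) rfl hz = 0 :=
    Abelian.Ext.eq_zero_of_hasProjectiveDimensionLT _ (n + 1) (by omega)
  exact (P.extMk_eq_zero_iff z (j + 2) rfl hz j rfl).1 hclass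

/-- The sequence `0 → R/(J : x) → R/J → R/(J + (x)) → 0` whose first map is multiplication
by `x`. -/
def colonShortComplex (J : Ideal R) (x : R) : ShortComplex (ModuleCat.{u} R) where
  X₁ := ModuleCat.of R (R ⧸ J.colon {x})
  X₂ := ModuleCat.of R (R ⧸ J)
  X₃ := ModuleCat.of R (R ⧸ (J ⊔ Ideal.span {x}))
  f := ModuleCat.ofHom <| Submodule.mapQ _ J (LinearMap.mulRight R x) fun _ ht ↦
    Submodule.mem_colon_singleton.1 ht
  g := ModuleCat.ofHom <| Submodule.factor le_sup_left
  zero := by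
    ext
    exact (Submodule.Quotient.mk_eq_zero _).2
      (Ideal.mem_sup_right (Ideal.mul_mem_left _ _ (Ideal.mem_span_singleton_self x)))

lemma colonShortComplex_shortExact (J : Ideal R) (x : R) :
    (colonShortComplex J x).ShortExact := by
  refine ModuleCat.shortComplex_shortExact _ (fun y ↦ ⟨?_, ?_⟩) ?_
    (Submodule.factor_surjective le_sup_left)
  · obtain ⟨y, rfl⟩ := Submodule.Quotient.mk_surjective _ y
    intro hy
    obtain ⟨a, ha, b, hb, rfl⟩ := Submodule.mem_sup.1 ((Submodule.Quotient.mk_eq_zero _).1 hy)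
    obtain ⟨t, rfl⟩ := Ideal.mem_span_singleton'.1 hb
    refine ⟨Submodule.Quotient.mk t, (Submodule.Quotient.eq J).2 ?_⟩
    simpa using ha
  · rintro ⟨t, rfl⟩
    exact LinearMap.congr_fun (congr_arg ModuleCat.Hom.hom (colonShortComplex J x).zero) t
  · refine (injective_iff_map_eq_zero (colonShortComplex J x).f.hom).2 fun t ht ↦ ?_
    obtain ⟨t, rfl⟩ := Submodule.Quotient.mk_surjective _ t
    exact (Submodule.Quotient.mk_eq_zero _).2
      (Submodule.mem_colon_singleton.2 ((Submodule.Quotient.mk_eq_zero J).1 ht))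

lemma hasProjectiveDimensionLE_quotient_of_colon {J : Ideal R} {x : R} {d : ℕ}
    (hcolon : HasProjectiveDimensionLE (ModuleCat.of R (R ⧸ J.colon {x})) d)
    (hsup : HasProjectiveDimensionLE (ModuleCat.of R (R ⧸ (J ⊔ Ideal.span {x}))) d) :
    HasProjectiveDimensionLE (ModuleCat.of R (R ⧸ J)) d :=
  (colonShortComplex_shortExact J x).hasProjectiveDimensionLT_X₂ (d + 1) hcolon hsup

lemma colon_singleton_eq_self_of_isSMulRegular {J : Ideal R} {x : R}
    (hx : IsSMulRegular (R ⧸ J) x) : J.colon {x} = J :=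
  le_antisymm
    (fun t ht ↦ mem_of_isSMulRegular_quotient_of_smul_mem hx <| by
      simpa [mul_comm] using Submodule.mem_colon_singleton.1 ht)
    Ideal.le_colon

lemma hasProjectiveDimensionLE_quotient_sup_span_singleton {J : Ideal R} {x : R} {d : ℕ}
    (hx : IsSMulRegular (R ⧸ J) x) (hJ : HasProjectiveDimensionLE (ModuleCat.of R (R ⧸ J)) d) :
    HasProjectiveDimensionLE (ModuleCat.of R (R ⧸ (J ⊔ Ideal.span {x}))) (d + 1) := by
  refine (colonShortComplex_shortExact J x).hasProjectiveDimensionLT_X₃ (d + 1) ?_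
    (hasProjectiveDimensionLT_of_ge (ModuleCat.of R (R ⧸ J)) (d + 1) (d + 2) (by omega))
  change HasProjectiveDimensionLE (ModuleCat.of R (R ⧸ J.colon {x})) d
  rwa [colon_singleton_eq_self_of_isSMulRegular hx]

lemma colon_sup_span_singleton_mul {J : Ideal R} {x : R} (hx : IsSMulRegular (R ⧸ J) x)
    (K : Ideal R) : (J ⊔ Ideal.span {x} * K).colon {x} = J ⊔ K := by
  ext t
  rw [Submodule.mem_colon_singleton, smul_eq_mul, mul_comm t x]
  constructor
  · intro ht
    obtain ⟨a, ha, b, hb, hab⟩ := Submodule.mem_sup.1 ht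
    obtain ⟨c, hc, rfl⟩ := Ideal.mem_span_singleton_mul.1 hb
    have hsub : t - c ∈ J := mem_of_isSMulRegular_quotient_of_smul_mem hx <| by
      rwa [smul_eq_mul, mul_sub, ← hab, add_sub_cancel_right]
    rw [← sub_add_cancel t c]
    exact Submodule.add_mem_sup hsub hc
  · intro ht
    obtain ⟨a, ha, c, hc, rfl⟩ := Submodule.mem_sup.1 ht
    rw [mul_add]
    exact Submodule.add_mem_sup (J.mul_mem_left x ha)
      (Ideal.mul_mem_mul (Ideal.mem_span_singleton_self x) hc)

lemma hasProjectiveDimensionLE_quotient_sup_span_singleton_mul {J K : Ideal R} {x : R} {d : ℕ}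
    (hx : IsSMulRegular (R ⧸ J) x)
    (hK : HasProjectiveDimensionLE (ModuleCat.of R (R ⧸ (J ⊔ K))) d)
    (hspan : HasProjectiveDimensionLE (ModuleCat.of R (R ⧸ (J ⊔ Ideal.span {x}))) d) :
    HasProjectiveDimensionLE (ModuleCat.of R (R ⧸ (J ⊔ Ideal.span {x} * K))) d := by
  have hsup : J ⊔ Ideal.span {x} * K ⊔ Ideal.span {x} = J ⊔ Ideal.span {x} := by
    rw [sup_assoc, sup_eq_right.2 (Ideal.mul_le_left : Ideal.span {x} * K ≤ _)]
  apply hasProjectiveDimensionLE_quotient_of_colon (x := x)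
  · rwa [colon_sup_span_singleton_mul hx]
  · rwa [hsup]

lemma hasProjectiveDimensionLE_quotient_bot :
    HasProjectiveDimensionLE (ModuleCat.of R (R ⧸ (⊥ : Ideal R))) 0 := by
  have : Module.Projective R (R ⧸ (⊥ : Ideal R)) :=
    .of_equiv (Submodule.quotEquivOfEqBot ⊥ rfl).symm
  exact (projective_iff_hasProjectiveDimensionLE_zero _).1 inferInstance

end ProjectiveDimension

section UniqueFactorization

variable {R : Type u} [CommRing R]

lemma sup_span_image_le_of_sub_mem {ι : Type*} {J : Ideal R} {f g : ι → R} {s : Set ι}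
    (h : ∀ i ∈ s, f i - g i ∈ J) : J ⊔ Ideal.span (f '' s) ≤ J ⊔ Ideal.span (g '' s) := by
  refine sup_le le_sup_left (Ideal.span_le.2 ?_)
  rintro _ ⟨i, hi, rfl⟩
  rw [SetLike.mem_coe, ← sub_add_cancel (f i) (g i)]
  exact Submodule.add_mem_sup (h i hi) (Ideal.subset_span (Set.mem_image_of_mem g hi))

lemma sup_span_image_eq_of_sub_mem {ι : Type*} {J : Ideal R} {f g : ι → R} {s : Set ι}
    (h : ∀ i ∈ s, f i - g i ∈ J) : J ⊔ Ideal.span (f '' s) = J ⊔ Ideal.span (g '' s) :=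
  le_antisymm (sup_span_image_le_of_sub_mem h) <| sup_span_image_le_of_sub_mem fun i hi ↦ by
    simpa using neg_mem (h i hi)

lemma sup_span_pair_eq_of_sub_mem {J : Ideal R} {a b a' b' : R} (ha : a - a' ∈ J)
    (hb : b - b' ∈ J) : J ⊔ Ideal.span {a, b} = J ⊔ Ideal.span {a', b'} := by
  simpa [Set.image_pair] using sup_span_image_eq_of_sub_mem (f := ![a, b]) (g := ![a', b'])
    (s := {0, 1}) (J := J) (by simp [ha, hb])

lemma isSMulRegular_quotient_of_notMem {P : Ideal R} [P.IsPrime] {a : R} (ha : a ∉ P) :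
    IsSMulRegular (R ⧸ P) a :=
  (isSMulRegular_quotient_iff_mem_of_smul_mem P a).2 fun _ ht ↦
    (Ideal.IsPrime.mem_or_mem ‹_› ht).resolve_left ha

lemma mem_sup_span_singleton_iff_mk_dvd {J : Ideal R} {a t : R} :
    t ∈ J ⊔ Ideal.span {a} ↔ Ideal.Quotient.mk J a ∣ Ideal.Quotient.mk J t := by
  rw [← Ideal.mem_span_singleton, ← Set.image_singleton, ← Ideal.map_span,
    ← Ideal.mem_comap, Ideal.comap_map_of_surjective' _ Ideal.Quotient.mk_surjective,
    Ideal.mk_ker, sup_comm]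

variable {P : Ideal R} [UniqueFactorizationMonoid (R ⧸ P)] {d : ℕ}

lemma isSMulRegular_quotient_sup_span_of_isRelPrime {a b : R}
    (hab : IsRelPrime (Ideal.Quotient.mk P a) (Ideal.Quotient.mk P b)) :
    IsSMulRegular (R ⧸ (P ⊔ Ideal.span {a})) b := by
  refine (isSMulRegular_quotient_iff_mem_of_smul_mem _ b).2 fun t ht ↦ ?_
  rw [mem_sup_span_singleton_iff_mk_dvd, smul_eq_mul, map_mul] at ht
  exact mem_sup_span_singleton_iff_mk_dvd.2 (hab.dvd_of_dvd_mul_left ht)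

lemma hasProjectiveDimensionLE_quotient_sup_span_pair_of_isRelPrime [P.IsPrime]
    (hP : HasProjectiveDimensionLE (ModuleCat.of R (R ⧸ P)) d) {a b : R} (ha : a ∉ P)
    (hab : IsRelPrime (Ideal.Quotient.mk P a) (Ideal.Quotient.mk P b)) :
    HasProjectiveDimensionLE (ModuleCat.of R (R ⧸ (P ⊔ Ideal.span {a, b}))) (d + 2) := by
  rw [Ideal.span_insert, ← sup_assoc]
  exact hasProjectiveDimensionLE_quotient_sup_span_singleton
    (isSMulRegular_quotient_sup_span_of_isRelPrime hab)
    (hasProjectiveDimensionLE_quotient_sup_span_singleton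
      (isSMulRegular_quotient_of_notMem ha) hP)

lemma exists_isRelPrime_sup_span_pair_eq {a : R} (ha : a ∉ P) (b : R) :
    ∃ a' b' c : R, a' ∉ P ∧ c ∉ P ∧
      IsRelPrime (Ideal.Quotient.mk P a') (Ideal.Quotient.mk P b') ∧
      P ⊔ Ideal.span {a, b} = P ⊔ Ideal.span {c} * Ideal.span {a', b'} := by
  have ha₀ : Ideal.Quotient.mk P a ≠ 0 := mt Ideal.Quotient.eq_zero_iff_mem.1 ha
  obtain ⟨a', b', c, hrel, hca, hcb⟩ :=
    UniqueFactorizationMonoid.exists_reduced_factors _ ha₀ (Ideal.Quotient.mk P b)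
  obtain ⟨a', rfl⟩ := Ideal.Quotient.mk_surjective a'
  obtain ⟨b', rfl⟩ := Ideal.Quotient.mk_surjective b'
  obtain ⟨c, rfl⟩ := Ideal.Quotient.mk_surjective c
  rw [← map_mul, eq_comm, Ideal.Quotient.mk_eq_mk_iff_sub_mem] at hca hcb
  have hcaP : c * a' ∉ P := fun h ↦ ha <| by simpa using add_mem hca h
  refine ⟨a', b', c, fun h ↦ hcaP (P.mul_mem_left c h), fun h ↦ hcaP (P.mul_mem_right a' h),
    hrel, ?_⟩
  rw [Ideal.span_mul_span', Set.singleton_mul, Set.image_pair]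
  exact sup_span_pair_eq_of_sub_mem hca hcb

lemma hasProjectiveDimensionLE_quotient_sup_span_pair [P.IsPrime]
    (hP : HasProjectiveDimensionLE (ModuleCat.of R (R ⧸ P)) d) (a b : R) :
    HasProjectiveDimensionLE (ModuleCat.of R (R ⧸ (P ⊔ Ideal.span {a, b}))) (d + 2) := by
  wlog ha : a ∉ P generalizing a b
  · by_cases hb : b ∈ P
    · rw [sup_eq_left.2 (Ideal.span_le.2 (Set.pair_subset (not_not.1 ha) hb))]
      exact hasProjectiveDimensionLT_of_ge _ (d + 1) (d + 3) (by omega)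
    · rw [Set.pair_comm]
      exact this b a hb
  obtain ⟨a', b', c, ha', hc, hrel, hspan⟩ := exists_isRelPrime_sup_span_pair_eq ha b
  have hPc := hasProjectiveDimensionLE_quotient_sup_span_singleton
    (isSMulRegular_quotient_of_notMem hc) hP
  rw [hspan]
  exact hasProjectiveDimensionLE_quotient_sup_span_singleton_mul
    (isSMulRegular_quotient_of_notMem hc)
    (hasProjectiveDimensionLE_quotient_sup_span_pair_of_isRelPrime hP ha' hrel)
    (hasProjectiveDimensionLT_of_ge _ (d + 2) (d + 3) (by omega))

end UniqueFactorization

section Koszul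

variable {R : Type*} [CommRing R]

/-- Every syzygy of `x, y, z` is a combination of the three Koszul syzygies, i.e. the first
Koszul homology of `x, y, z` vanishes. -/
def HasKoszulSyzygies (x y z : R) : Prop :=
  ∀ u v w, u * x + v * y + w * z = 0 →
    ∃ α β γ, u = α * y + β * z ∧ v = -(α * x) + γ * z ∧ w = -(β * x) - γ * y

lemma hasKoszulSyzygies_of_isWeaklyRegular {x y z : R}
    (h : RingTheory.Sequence.IsWeaklyRegular R [x, y, z]) : HasKoszulSyzygies x y z := by
  have hmod := fun i hi ↦ (isSMulRegular_quotient_iff_mem_of_smul_mem _ _).1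
    (h.regular_mod_prev i hi)
  have hx : ∀ t, x * t = 0 → t = 0 := by
    simpa [Ideal.ofList_nil] using hmod 0 (by simp)
  have hy : ∀ t, y * t ∈ Ideal.span {x} → t ∈ Ideal.span {x} := by
    simpa [Ideal.ofList_cons] using hmod 1 (by simp)
  have hz : ∀ t, z * t ∈ Ideal.span {x, y} → t ∈ Ideal.span {x, y} := by
    simpa [Ideal.ofList_cons, ← Ideal.span_insert] using hmod 2 (by simp)
  intro u v w huvw
  obtain ⟨β, γ, hw⟩ : ∃ β γ, β * x + γ * y = w := Ideal.mem_span_pair.1 <| hz w <|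
    Ideal.mem_span_pair.2 ⟨-u, -v, by linear_combination -huvw⟩
  obtain ⟨α, hv⟩ : ∃ α, α * x = v + γ * z := Ideal.mem_span_singleton'.1 <| hy _ <|
    Ideal.mem_span_singleton'.2 ⟨-u - β * z, by linear_combination -huvw - z * hw⟩
  have hu : u + α * y + β * z = 0 := hx _ <| by linear_combination huvw + y * hv + z * hw
  exact ⟨-α, -β, -γ, by linear_combination hu, by linear_combination -hv,
    by linear_combination -hw⟩

lemma span_triple_ne_top_of_isRegular {x y z : R}
    (h : RingTheory.Sequence.IsRegular R [x, y, z]) : Ideal.span {x, y, z} ≠ ⊤ := by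
  simpa [Ideal.ofList_cons, ← Ideal.span_insert, eq_comm] using h.top_ne_smul

lemma HasKoszulSyzygies.change_generators {x y z : R} (h : HasKoszulSyzygies x y z)
    {l₁ l₂ a b c d : R} (hdet : IsUnit (a * d - b * c)) :
    HasKoszulSyzygies x (l₁ * x + a * y + b * z) (l₂ * x + c * y + d * z) := by
  obtain ⟨e, he⟩ := hdet.exists_left_inv
  intro u v w huvw
  obtain ⟨α, β, γ, hu, hv, hw⟩ :=
    h (u + v * l₁ + w * l₂) (v * a + w * c) (v * b + w * d) (by linear_combination huvw)
  -- The coefficients transform by the second exterior power of the inverse change of generators.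
  refine ⟨-(e * (β * c - α * d - γ * l₂)), -(e * (α * b - β * a + γ * l₁)), e * γ, ?_, ?_, ?_⟩
  · linear_combination hu - (α * y + β * z) * he - l₁ * (-v * he + e * d * hv - e * c * hw) -
      l₂ * (-w * he + e * a * hw - e * b * hv)
  · linear_combination -v * he + e * d * hv - e * c * hw
  · linear_combination -w * he + e * a * hw - e * b * hv

lemma HasKoszulSyzygies.isSMulRegular_quotient {x y z : R} (h : HasKoszulSyzygies x y z) :
    IsSMulRegular (R ⧸ Ideal.span {y, z}) x := by
  refine (isSMulRegular_quotient_iff_mem_of_smul_mem _ x).2 fun t ht ↦ ?_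
  obtain ⟨v, w, hvw⟩ := Ideal.mem_span_pair.1 ht
  obtain ⟨α, β, -, ht, -, -⟩ := h (-t) v w (by rw [smul_eq_mul] at hvw; linear_combination hvw)
  exact Ideal.mem_span_pair.2 ⟨-α, -β, by linear_combination ht⟩

end Koszul

section Height

variable {R : Type u} [CommRing R] [IsNoetherianRing R]

lemma heightENat_le_ncard_of_le_span {I : Ideal R} {s : Set R} (hs : s.Finite)
    (hI : I ≤ Ideal.span s) (htop : Ideal.span s ≠ ⊤) : I.heightENat ≤ s.ncard := by
  obtain ⟨p, hp⟩ := Ideal.nonempty_minimalPrimes htop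
  have := hp.isPrime
  calc I.heightENat ≤ Order.height (⟨p, this⟩ : PrimeSpectrum R) :=
      iInf₂_le (⟨p, this⟩ : PrimeSpectrum R) (hI.trans hp.1.2)
    _ = p.height := (PrimeSpectrum.height_eq_orderHeight _).symm
    _ ≤ s.ncard := Ideal.height_le_card_of_mem_minimalPrimes_span hs hp

end Height

section PlaneVectors

variable {F ι : Type*} [Field F]

lemma exists_det_ne_zero_or_exists_eq_mul (a b : ι → F) :
    (∃ i j, a i * b j - b i * a j ≠ 0) ∨ ∃ α β, ∀ m, ∃ s, a m = s * α ∧ b m = s * β := by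
  rw [or_iff_not_imp_left]
  push Not
  intro hdet
  by_cases! hzero : ∀ i, a i = 0 ∧ b i = 0
  · exact ⟨0, 0, fun m ↦ ⟨0, by simp [hzero m]⟩⟩
  obtain ⟨i, hi⟩ := hzero
  refine ⟨a i, b i, fun m ↦ ?_⟩
  by_cases ha : a i = 0
  · have hb := hi ha
    have ham : a m = 0 := by simpa [ha, hb] using hdet i m
    exact ⟨b m / b i, by simp [ha, ham], (div_mul_cancel₀ _ hb).symm⟩
  · refine ⟨a m / a i, (div_mul_cancel₀ _ ha).symm, ?_⟩
    rw [div_mul_eq_mul_div, eq_div_iff ha]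
    linear_combination hdet i m

lemma exists_eq_add_of_det_ne_zero {a b c d : F} (hdet : a * d - b * c ≠ 0) (e f : F) :
    ∃ s t, e = s * a + t * c ∧ f = s * b + t * d := by
  refine ⟨(e * d - f * c) / (a * d - b * c), (a * f - b * e) / (a * d - b * c), ?_, ?_⟩
  · rw [div_mul_eq_mul_div, div_mul_eq_mul_div, ← add_div, eq_div_iff hdet]
    ring
  · rw [div_mul_eq_mul_div, div_mul_eq_mul_div, ← add_div, eq_div_iff hdet]
    ring

end PlaneVectors

open MvPolynomial

section Elimination

variable {σ A : Type*} [CommRing A] {j : σ}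

open scoped Classical in
/-- The substitution `X j ↦ p`, eliminating the variable `X j`. -/
noncomputable def eliminate (p : MvPolynomial {i // i ≠ j} A) :
    MvPolynomial σ A →ₐ[A] MvPolynomial {i // i ≠ j} A :=
  aeval fun i ↦ if h : i = j then p else X ⟨i, h⟩

lemma eliminate_X_self (p : MvPolynomial {i // i ≠ j} A) : eliminate p (X j) = p := by
  simp [eliminate]

lemma eliminate_X_of_ne (p : MvPolynomial {i // i ≠ j} A) {i : σ} (h : i ≠ j) :
    eliminate p (X i) = X ⟨i, h⟩ := by
  simp [eliminate, h]

lemma eliminate_rename (p r : MvPolynomial {i // i ≠ j} A) :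
    eliminate p (rename Subtype.val r) = r := by
  suffices (eliminate p).comp (rename Subtype.val) = AlgHom.id A _ from AlgHom.congr_fun this r
  ext i : 1
  simp [eliminate_X_of_ne p i.2]

lemma eliminate_surjective (p : MvPolynomial {i // i ≠ j} A) :
    Function.Surjective (eliminate p) :=
  fun r ↦ ⟨rename Subtype.val r, eliminate_rename p r⟩

lemma sub_rename_eliminate_mem (p : MvPolynomial {i // i ≠ j} A) (r : MvPolynomial σ A) :
    r - rename Subtype.val (eliminate p r) ∈ Ideal.span {X j - rename Subtype.val p} := by
  rw [← Ideal.Quotient.mk_eq_mk_iff_sub_mem, ← Ideal.Quotient.mkₐ_eq_mk A]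
  refine AlgHom.congr_fun (φ₁ := Ideal.Quotient.mkₐ A _) (φ₂ := (Ideal.Quotient.mkₐ A _).comp
    ((rename Subtype.val).comp (eliminate p))) (algHom_ext fun i ↦ ?_) r
  obtain rfl | h := eq_or_ne i j
  · simp [eliminate_X_self, Ideal.Quotient.mk_eq_mk_iff_sub_mem]
  · simp [eliminate_X_of_ne p h]

lemma ker_eliminate (p : MvPolynomial {i // i ≠ j} A) :
    RingHom.ker (eliminate p) = Ideal.span {X j - rename Subtype.val p} := by
  refine le_antisymm (fun r hr ↦ ?_) ?_
  · simpa [(RingHom.mem_ker).1 hr] using sub_rename_eliminate_mem p r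
  · rw [Ideal.span_singleton_le_iff_mem, RingHom.mem_ker, map_sub, eliminate_X_self,
      eliminate_rename, sub_self]

lemma isHomogeneous_eliminate {p : MvPolynomial {i // i ≠ j} A} (hp : p.IsHomogeneous 1)
    {r : MvPolynomial σ A} {n : ℕ} (hr : r.IsHomogeneous n) :
    (eliminate p r).IsHomogeneous n := by
  rw [← one_mul n]
  refine hr.aeval _ fun i ↦ ?_
  split_ifs
  exacts [hp, isHomogeneous_X A _]

end Elimination

section LinearForms

variable {σ : Type v} {k : Type u} [Field k]

lemma exists_single_eq_of_coeff_ne_zero {l : MvPolynomial σ k} (hl : l.IsHomogeneous 1)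
    {d : σ →₀ ℕ} (hd : coeff d l ≠ 0) : ∃ i, Finsupp.single i 1 = d :=
  Finsupp.range_single_one.ge (not_imp_comm.1 hl.coeff_eq_zero hd)

lemma exists_eq_C_mul_X_sub_rename {l : MvPolynomial σ k} (hl : l.IsHomogeneous 1)
    (hl₀ : l ≠ 0) : ∃ (c : k) (j : σ) (p : MvPolynomial {i // i ≠ j} k),
      c ≠ 0 ∧ p.IsHomogeneous 1 ∧ l = C c * (X j - rename Subtype.val p) := by
  classical
  obtain ⟨d, hd⟩ := ne_zero_iff.1 hl₀
  obtain ⟨j, rfl⟩ := exists_single_eq_of_coeff_ne_zero hl hd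
  set c := coeff (Finsupp.single j 1) l
  have hr : (X j - C c⁻¹ * l).IsHomogeneous 1 := by
    simpa using (isHomogeneous_X k j).sub ((isHomogeneous_C σ c⁻¹).mul hl)
  have hvars : ((X j - C c⁻¹ * l).vars : Set σ) ⊆ Set.range (Subtype.val : {i // i ≠ j} → σ) := by
    refine fun i hi ↦ ⟨⟨i, ?_⟩, rfl⟩
    rintro rfl
    obtain ⟨d, hd', hid⟩ := (mem_vars_iff_mem_support i).1 hi
    rw [mem_support_iff] at hd'
    obtain ⟨i', rfl⟩ := exists_single_eq_of_coeff_ne_zero hr hd'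
    obtain rfl : i = i' := by simpa [Finsupp.single_apply, eq_comm] using hid
    exact hd' (by simp [c, inv_mul_cancel₀ hd])
  obtain ⟨p, hp⟩ := exists_rename_eq_of_vars_subset_range _ _ Subtype.val_injective hvars
  rw [← hp, IsHomogeneous.rename_isHomogeneous_iff Subtype.val_injective] at hr
  refine ⟨c, j, p, hd, hr, ?_⟩
  rw [hp, sub_sub_cancel, ← mul_assoc, ← C_mul, mul_inv_cancel₀ hd, C_1, one_mul]

lemma exists_algHom_ker_eq_span_singleton {l : MvPolynomial σ k} (hl : l.IsHomogeneous 1)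
    (hl₀ : l ≠ 0) : ∃ (τ : Type v) (ψ : MvPolynomial σ k →ₐ[k] MvPolynomial τ k),
      Function.Surjective ψ ∧ RingHom.ker ψ = Ideal.span {l} ∧
      ∀ p n, p.IsHomogeneous n → (ψ p).IsHomogeneous n := by
  obtain ⟨c, j, p, hc, hp, rfl⟩ := exists_eq_C_mul_X_sub_rename hl hl₀
  refine ⟨_, eliminate p, eliminate_surjective p, ?_, fun r n ↦ isHomogeneous_eliminate hp⟩
  rw [ker_eliminate, Ideal.span_singleton_mul_left_unit ((isUnit_iff_ne_zero.2 hc).map C)]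

lemma exists_algHom_ker_eq_span {s : Finset (MvPolynomial σ k)}
    (hs : ∀ l ∈ s, l.IsHomogeneous 1) :
    ∃ (τ : Type v) (φ : MvPolynomial σ k →ₐ[k] MvPolynomial τ k),
      Function.Surjective φ ∧ RingHom.ker φ = Ideal.span s ∧
      ∀ p n, p.IsHomogeneous n → (φ p).IsHomogeneous n := by
  classical
  induction s using Finset.induction_on with
  | empty =>
    refine ⟨σ, AlgHom.id k _, Function.surjective_id, ?_, fun _ _ ↦ id⟩
    rw [Finset.coe_empty, Ideal.span_empty, RingHom.ker_eq_bot_iff_eq_zero]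
    exact fun _ ↦ id
  | insert l s _ ih =>
    rw [Finset.forall_mem_insert] at hs
    obtain ⟨τ, φ, hφ, hker, hhom⟩ := ih hs.2
    rw [Finset.coe_insert, Ideal.span_insert]
    by_cases hl₀ : φ l = 0
    · rw [← RingHom.mem_ker, hker] at hl₀
      rw [sup_eq_right.2 ((Ideal.span_singleton_le_iff_mem _).2 hl₀)]
      exact ⟨τ, φ, hφ, hker, hhom⟩
    · obtain ⟨υ, ψ, hψ, hkerψ, hhomψ⟩ :=
        exists_algHom_ker_eq_span_singleton (hhom l 1 hs.1) hl₀
      refine ⟨υ, ψ.comp φ, hψ.comp hφ, ?_, fun p n hp ↦ hhomψ _ n (hhom p n hp)⟩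
      calc RingHom.ker (ψ.comp φ) = (RingHom.ker ψ).comap φ :=
            (RingHom.comap_ker ψ.toRingHom φ.toRingHom).symm
        _ = ((Ideal.span {l}).map φ).comap φ := by
            rw [hkerψ, Ideal.map_span, Set.image_singleton]
        _ = Ideal.span {l} ⊔ Ideal.span s := by
            rw [Ideal.comap_map_of_surjective' φ hφ, hker]

lemma isPrime_span_linear {s : Finset (MvPolynomial σ k)} (hs : ∀ l ∈ s, l.IsHomogeneous 1) :
    (Ideal.span (s : Set (MvPolynomial σ k))).IsPrime := by
  obtain ⟨τ, φ, -, hker, -⟩ := exists_algHom_ker_eq_span hs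
  exact hker ▸ RingHom.ker_isPrime φ

lemma uniqueFactorizationMonoid_quotient_span_linear {s : Finset (MvPolynomial σ k)}
    (hs : ∀ l ∈ s, l.IsHomogeneous 1) :
    UniqueFactorizationMonoid (MvPolynomial σ k ⧸ Ideal.span (s : Set (MvPolynomial σ k))) := by
  obtain ⟨τ, φ, hφ, hker, -⟩ := exists_algHom_ker_eq_span hs
  rw [← hker]
  exact (Ideal.quotientKerAlgEquivOfSurjective hφ).symm.toMulEquiv.uniqueFactorizationMonoid
    inferInstance

lemma hasProjectiveDimensionLE_quotient_span_linear {s : Finset (MvPolynomial σ k)}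
    (hs : ∀ l ∈ s, l.IsHomogeneous 1) :
    HasProjectiveDimensionLE (ModuleCat.of (MvPolynomial σ k)
      (MvPolynomial σ k ⧸ Ideal.span (s : Set (MvPolynomial σ k)))) s.card := by
  classical
  induction s using Finset.induction_on with
  | empty =>
    rw [Finset.coe_empty, Ideal.span_empty]
    exact hasProjectiveDimensionLE_quotient_bot
  | insert l s hl ih =>
    rw [Finset.forall_mem_insert] at hs
    have := isPrime_span_linear hs.2
    rw [Finset.coe_insert, Ideal.span_insert, Finset.card_insert_of_notMem hl, sup_comm]
    by_cases hls : l ∈ Ideal.span (s : Set (MvPolynomial σ k))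
    · rw [sup_eq_left.2 ((Ideal.span_singleton_le_iff_mem _).2 hls)]
      have := ih hs.2
      exact hasProjectiveDimensionLT_of_ge _ (s.card + 1) (s.card + 2) (by omega)
    · exact hasProjectiveDimensionLE_quotient_sup_span_singleton
        (isSMulRegular_quotient_of_notMem hls) (ih hs.2)

lemma hasProjectiveDimensionLE_quotient_span_pair_sup_span_linear
    {s : Finset (MvPolynomial σ k)} (hs : ∀ l ∈ s, l.IsHomogeneous 1) (a b : MvPolynomial σ k) :
    HasProjectiveDimensionLE (ModuleCat.of (MvPolynomial σ k)
      (MvPolynomial σ k ⧸ (Ideal.span {a, b} ⊔ Ideal.span (s : Set (MvPolynomial σ k)))))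
      (s.card + 2) := by
  have := isPrime_span_linear hs
  have := uniqueFactorizationMonoid_quotient_span_linear hs
  rw [sup_comm]
  exact hasProjectiveDimensionLE_quotient_sup_span_pair
    (hasProjectiveDimensionLE_quotient_span_linear hs) a b

end LinearForms

section Quadrics

variable {σ A : Type*} [CommSemiring A]

lemma homogeneousComponent_add_mul {q : MvPolynomial σ A} {n : ℕ} (hq : q.IsHomogeneous n)
    (m : ℕ) (p : MvPolynomial σ A) :
    homogeneousComponent (m + n) (p * q) = homogeneousComponent m p * q := by
  let : GradedAlgebra (homogeneousSubmodule σ A) := gradedAlgebra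
  have hdec := DirectSum.coe_decompose_mul_add_of_right_mem (homogeneousSubmodule σ A)
    (i := m) (a := p) ((mem_homogeneousSubmodule n q).2 hq)
  exact (decomposition.decompose'_apply (p * q) (m + n)).symm.trans <| hdec.trans <|
    congr_arg (· * q) (decomposition.decompose'_apply p m)

lemma exists_eq_mul_add_C_mul_add_C_mul {x q q' f : MvPolynomial σ A} (hx : x.IsHomogeneous 1)
    (hq : q.IsHomogeneous 2) (hq' : q'.IsHomogeneous 2) (hf : f.IsHomogeneous 2)
    (h : f ∈ Ideal.span {x, q, q'}) :
    ∃ (l : MvPolynomial σ A) (a b : A), l.IsHomogeneous 1 ∧ f = l * x + C a * q + C b * q' := by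
  obtain ⟨u, v, w, rfl⟩ := Submodule.mem_span_triple.1 h
  simp only [smul_eq_mul] at hf ⊢
  refine ⟨homogeneousComponent 1 u, coeff 0 v, coeff 0 w, homogeneousComponent_isHomogeneous 1 u,
    ?_⟩
  calc _ = homogeneousComponent 2 (u * x + v * q + w * q') := (homogeneousComponent_eq_self hf).symm
    _ = _ := by
      rw [map_add, map_add, homogeneousComponent_add_mul hx 1,
        homogeneousComponent_add_mul hq 0, homogeneousComponent_add_mul hq' 0,
        homogeneousComponent_zero, homogeneousComponent_zero]

end Quadrics

section MainTheorem

variable {σ : Type v} {k : Type u} [Field k] {ι : Type*} {x q q' : MvPolynomial σ k}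
  {f l : ι → MvPolynomial σ k} {a b : ι → k}

lemma isSMulRegular_quotient_span_pair {i j : ι} (hkoszul : HasKoszulSyzygies x q q')
    (hf : ∀ m, f m = l m * x + C (a m) * q + C (b m) * q')
    (hdet : a i * b j - b i * a j ≠ 0) :
    IsSMulRegular (MvPolynomial σ k ⧸ Ideal.span {f i, f j}) x := by
  have hunit : IsUnit (C (a i) * C (b j) - C (b i) * C (a j) : MvPolynomial σ k) := by
    rw [← C_mul, ← C_mul, ← C_sub]
    exact (isUnit_iff_ne_zero.2 hdet).map C
  rw [hf i, hf j]
  exact (hkoszul.change_generators hunit).isSMulRegular_quotient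

lemma exists_linear_span_range_eq {i j : ι} (hl : ∀ m, (l m).IsHomogeneous 1)
    (hf : ∀ m, f m = l m * x + C (a m) * q + C (b m) * q')
    (hdet : a i * b j - b i * a j ≠ 0) :
    ∃ l' : ι → MvPolynomial σ k, (∀ m, (l' m).IsHomogeneous 1) ∧
      Ideal.span (Set.range f) =
        Ideal.span {f i, f j} ⊔ Ideal.span {x} * Ideal.span (l' '' {i, j}ᶜ) := by
  choose s t ha hb using fun m ↦ exists_eq_add_of_det_ne_zero hdet (a m) (b m)
  let l' m := l m - (C (s m) * l i + C (t m) * l j)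
  have hmem : ∀ m ∈ ({i, j} : Set ι)ᶜ, f m - x * l' m ∈ Ideal.span {f i, f j} := by
    refine fun m _ ↦ Ideal.mem_span_pair.2 ⟨C (s m), C (t m), ?_⟩
    simp only [hf, l', ha m, hb m, C_add, C_mul]
    ring
  have hC (c : k) (m : ι) : (C c * l m).IsHomogeneous 1 := by
    simpa using (isHomogeneous_C σ c).mul (hl m)
  refine ⟨l', fun m ↦ (hl m).sub ((hC _ i).add (hC _ j)), ?_⟩
  calc Ideal.span (Set.range f)
      = Ideal.span {f i, f j} ⊔ Ideal.span (f '' {i, j}ᶜ) := by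
        rw [← Set.image_pair, ← Ideal.span_union, ← Set.image_union, Set.union_compl_self,
          Set.image_univ]
    _ = Ideal.span {f i, f j} ⊔ Ideal.span ((fun m ↦ x * l' m) '' {i, j}ᶜ) :=
        sup_span_image_eq_of_sub_mem hmem
    _ = Ideal.span {f i, f j} ⊔ Ideal.span {x} * Ideal.span (l' '' {i, j}ᶜ) := by
        rw [Ideal.span_mul_span', Set.singleton_mul, Set.image_image]

lemma exists_det_ne_zero_of_two_lt_heightENat [Finite σ]
    (hf : ∀ m, f m = l m * x + C (a m) * q + C (b m) * q') (htop : Ideal.span {x, q, q'} ≠ ⊤)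
    (hht : 2 < (Ideal.span (Set.range f)).heightENat) :
    ∃ i j, a i * b j - b i * a j ≠ 0 := by
  refine (exists_det_ne_zero_or_exists_eq_mul a b).resolve_right ?_
  rintro ⟨α, β, hrank⟩
  set g := C α * q + C β * q'
  have hg : Ideal.span {x, g} ≤ Ideal.span {x, q, q'} := by
    refine Ideal.span_le.2 (Set.pair_subset (Ideal.subset_span (by simp)) ?_)
    exact add_mem (Ideal.mul_mem_left _ _ (Ideal.subset_span (by simp)))
      (Ideal.mul_mem_left _ _ (Ideal.subset_span (by simp)))
  have hfg : Ideal.span (Set.range f) ≤ Ideal.span {x, g} := by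
    rw [Ideal.span_le, Set.range_subset_iff]
    intro m
    obtain ⟨s, ha, hb⟩ := hrank m
    refine Ideal.mem_span_pair.2 ⟨l m, C s, ?_⟩
    simp only [hf, g, ha, hb, C_mul]
    ring
  refine hht.not_ge ((heightENat_le_ncard_of_le_span (Set.toFinite _) hfg
    (ne_top_of_le_ne_top htop hg)).trans ?_)
  exact_mod_cast Set.ncard_insert_le x {g} |>.trans (by simp)

lemma hasProjectiveDimensionLE_quotient_span_range [Fintype ι] (hι : 3 ≤ Fintype.card ι)
    (hx : x.IsHomogeneous 1) (hkoszul : HasKoszulSyzygies x q q') (hl : ∀ m, (l m).IsHomogeneous 1)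
    (hf : ∀ m, f m = l m * x + C (a m) * q + C (b m) * q')
    {i j : ι} (hdet : a i * b j - b i * a j ≠ 0) :
    HasProjectiveDimensionLE (ModuleCat.of (MvPolynomial σ k)
      (MvPolynomial σ k ⧸ Ideal.span (Set.range f))) (Fintype.card ι) := by
  classical
  have hij : i ≠ j := by
    rintro rfl
    exact hdet (by ring)
  obtain ⟨l', hl', hspan⟩ := exists_linear_span_range_eq hl hf hdet
  let s : Finset (MvPolynomial σ k) := ({i, j}ᶜ : Finset ι).image l'
  have hs : l' '' {i, j}ᶜ = s := by
    rw [Finset.coe_image, Finset.coe_compl, Finset.coe_pair]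
  have hcard : s.card + 2 ≤ Fintype.card ι := by
    have hle : s.card ≤ ({i, j}ᶜ : Finset ι).card := Finset.card_image_le
    rw [Finset.card_compl, Finset.card_pair hij] at hle
    omega
  have hslin : ∀ l ∈ s, l.IsHomogeneous 1 := Finset.forall_mem_image.2 fun m _ ↦ hl' m
  have hpd_s := hasProjectiveDimensionLE_quotient_span_pair_sup_span_linear hslin (f i) (f j)
  have hpd_x := hasProjectiveDimensionLE_quotient_span_pair_sup_span_linear
    (s := {x}) (by simpa using hx) (f i) (f j)
  rw [Finset.coe_singleton, Finset.card_singleton] at hpd_x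
  rw [hspan, hs]
  exact hasProjectiveDimensionLE_quotient_sup_span_singleton_mul
    (isSMulRegular_quotient_span_pair hkoszul hf hdet)
    (hasProjectiveDimensionLT_of_ge _ (s.card + 3) _ (by omega))
    (hasProjectiveDimensionLT_of_ge _ 4 _ (by omega))

end MainTheorem

/-- Let `x` be a linear form and `q, q'` quadrics such that `x, q, q'` is
a regular sequence, and let `I ⊆ (x, q, q')` be a homogeneous ideal of height `3`
generated by `n` quadrics. Then `pd_S(S/I) ≤ n`. -/
theorem pd_le_of_contained_in_linear_CI (k : Type u) [Field k] (N : ℕ) (n : ℕ)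
    (x q q' : MvPolynomial (Fin N) k)
    (hx : x.IsHomogeneous 1) (hq : q.IsHomogeneous 2) (hq' : q'.IsHomogeneous 2)
    (hreg : RingTheory.Sequence.IsRegular (MvPolynomial (Fin N) k) [x, q, q'])
    (f : Fin n → MvPolynomial (Fin N) k)
    (hf : ∀ i, (f i).IsHomogeneous 2)
    (I : Ideal (MvPolynomial (Fin N) k))
    (hI : I = Ideal.span (Set.range f))
    (hsub : I ≤ Ideal.span {x, q, q'})
    (hht : I.heightENat = 3) :
    projDim (MvPolynomial (Fin N) k) (MvPolynomial (Fin N) k ⧸ I) ≤ (n : ℕ∞) := by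
  subst hI
  have hmem : ∀ m, f m ∈ Ideal.span {x, q, q'} := fun m ↦ hsub (Ideal.subset_span ⟨m, rfl⟩)
  have htop := span_triple_ne_top_of_isRegular hreg
  choose l a b hl hdecomp using fun m ↦
    exists_eq_mul_add_C_mul_add_C_mul hx hq hq' (hf m) (hmem m)
  obtain ⟨i, j, hdet⟩ :=
    exists_det_ne_zero_of_two_lt_heightENat hdecomp htop (by rw [hht]; norm_num)
  have hn : 3 ≤ n := by
    have hle := heightENat_le_ncard_of_le_span (Set.finite_range f) le_rfl
      (ne_top_of_le_ne_top htop hsub)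
    rw [hht] at hle
    exact (Nat.cast_le.1 hle).trans ((Finite.card_range_le f).trans_eq (Nat.card_fin n))
  have hpd := hasProjectiveDimensionLE_quotient_span_range (by simpa using hn) hx
    (hasKoszulSyzygies_of_isWeaklyRegular hreg.toIsWeaklyRegular) hl hdecomp hdet
  rw [Fintype.card_fin] at hpd
  exact projDim_le_of_hasProjectiveDimensionLE hpd
end

section
/- Let S be a polynomial ring over a field k, let x, y be linearly independent linear forms, let q_1, …, q_s be quadrics contained in (x,y), written q_i = a_i x + b_i y with a_i, b_i linear forms, and let z_1, …, z_u (with u ≥ 1) be linear forms such that (z_1,…,z_u) has height at least 1. Set H = (q_1, …, q_s) + (z_1, …, z_u) and m = (x, y, a_1, …, a_s, b_1, …, b_s, z_1, …, z_u). Then every associated prime p of S/H with p ≠ m satisfies pd(S_p/H_p) ≤ s + u (equivalently, height(p) ≤ s + u). -/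
open CategoryTheory Opposite

universe u

/-!
Killing the `z i` costs at most one unit of height each and preserves the shape `a i * x + b i * y`
of the other generators, so suppose there are no `z i`.

If `x ∉ p` or `y ∉ p` then, by homogeneity, `p` meets `k[x, y]` in a prime of height at most `1`.
Localizing there turns `k[x, y]` into a local principal ideal domain, over which the quadrics are
polynomials of total degree at most `1`, and such polynomials can be removed one at a time: either a
common factor forces `height p ≤ 1`, or one of the polynomials eliminates a variable.

If `x, y ∈ p` but, say, `a i₀ ∉ p`, localize in the same way at the trace of `p` on the polynomial
ring in `a i₀` and one more linear form, chosen so that `b i₀` is a coefficient too. Then `a i₀` is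
a unit, the `i₀`-th quadric expresses `x` as a multiple of `y`, and the other quadrics acquire the
common factor `y`.

Finally, suppose that `p` contains `x`, `y`, all `a i` and all `b i`. The polynomial ring is a
polynomial extension of the subring `A` generated by these linear forms, and the quadrics lie in
`A`. An element of `p` outside the extension of the irrelevant ideal of `A` could be replaced by a
nonzero polynomial with coefficients in `k`, which is a nonzerodivisor modulo the quadrics. So `p`
is generated by these linear forms.
-/

lemma map_mem_map_iff {F R R' : Type*} [CommRing R] [CommRing R'] [FunLike F R R']
    [RingHomClass F R R'] {φ : F} (hφ : Function.Surjective φ) {J : Ideal R}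
    (hJ : RingHom.ker φ ≤ J) {r : R} : φ r ∈ J.map φ ↔ r ∈ J := by
  rw [← Ideal.mem_comap, Ideal.comap_map_of_surjective' φ hφ, sup_eq_left.2 hJ]

lemma map_equiv_mem_map_iff {E R R' : Type*} [CommRing R] [CommRing R'] [EquivLike E R R']
    [RingEquivClass E R R'] (e : E) {J : Ideal R} {r : R} : e r ∈ J.map e ↔ r ∈ J :=
  map_mem_map_iff (EquivLike.surjective e) (by simp)

lemma map_sup_of_ker_eq {F R R' : Type*} [CommRing R] [CommRing R'] [FunLike F R R']
    [RingHomClass F R R'] {φ : F} {J K : Ideal R} (hK : RingHom.ker φ = K) :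
    (J ⊔ K).map φ = J.map φ := by
  rw [Ideal.map_sup, (Ideal.map_eq_bot_iff_le_ker φ).2 hK.ge, sup_bot_eq]

lemma map_inj_of_ker_le {F R R' : Type*} [CommRing R] [CommRing R'] [FunLike F R R']
    [RingHomClass F R R'] {φ : F} (hφ : Function.Surjective φ) {J K : Ideal R}
    (hJ : RingHom.ker φ ≤ J) (hK : RingHom.ker φ ≤ K) : J.map φ = K.map φ ↔ J = K := by
  refine ⟨fun h => Ideal.ext fun r => ?_, congr_arg _⟩
  rw [← map_mem_map_iff hφ hJ, h, map_mem_map_iff hφ hK]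

/-- `p` is an associated prime of `R ⧸ I`, phrased inside `R`: `p` is prime and equals the colon
ideal `(I : f)` for some `f`. (Mathlib's `IsAssociatedPrime` involves the radical of the colon
ideal.) -/
structure IsColonPrime {R : Type*} [CommRing R] (I p : Ideal R) : Prop where
  isPrime : p.IsPrime
  exists_mem_iff : ∃ f, ∀ r, r ∈ p ↔ r * f ∈ I

namespace IsColonPrime

section CommRing

variable {R R' : Type*} [CommRing R] [CommRing R'] {I p : Ideal R}

lemma of_isAssociatedPrime [IsNoetherianRing R] (h : IsAssociatedPrime p (R ⧸ I)) :
    IsColonPrime I p := by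
  obtain ⟨hp, m, hm⟩ := isAssociatedPrime_iff.1 h
  obtain ⟨f, rfl⟩ := Ideal.Quotient.mk_surjective m
  refine ⟨hp, f, fun r => ?_⟩
  rw [hm, Submodule.mem_colon_singleton, Submodule.mem_bot, Algebra.smul_def,
    Ideal.Quotient.algebraMap_eq, ← map_mul, Ideal.Quotient.eq_zero_iff_mem]

lemma le (h : IsColonPrime I p) : I ≤ p := by
  obtain ⟨f, hf⟩ := h.exists_mem_iff
  exact fun r hr => (hf r).2 (I.mul_mem_right _ hr)

lemma exists_notMem (h : IsColonPrime I p) : ∃ f, f ∉ I ∧ ∀ r, r ∈ p ↔ r * f ∈ I := by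
  obtain ⟨f, hf⟩ := h.exists_mem_iff
  refine ⟨f, fun hfI => h.isPrime.ne_top ?_, hf⟩
  rwa [Ideal.eq_top_iff_one, hf, one_mul]

lemma height_eq_zero [IsDomain R] (h : IsColonPrime I p) (hI : I = ⊥) : p.height = 0 := by
  subst hI
  obtain ⟨f, hf₀, hf⟩ := h.exists_notMem
  have hp : p = ⊥ := by
    ext r
    rw [hf, Submodule.mem_bot, Submodule.mem_bot, mul_eq_zero_iff_right hf₀]
  rw [hp, Ideal.height_bot]

lemma map_of_surjective {F : Type*} [FunLike F R R'] [RingHomClass F R R']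
    (h : IsColonPrime I p) {φ : F} (hφ : Function.Surjective φ) (hI : RingHom.ker φ ≤ I) :
    IsColonPrime (I.map φ) (p.map φ) := by
  have := h.isPrime
  obtain ⟨f, hf⟩ := h.exists_mem_iff
  refine ⟨Ideal.map_isPrime_of_surjective hφ (hI.trans h.le), φ f, hφ.forall.2 fun r => ?_⟩
  rw [← map_mul, map_mem_map_iff hφ (hI.trans h.le), map_mem_map_iff hφ hI, hf]

lemma map_equiv {E : Type*} [EquivLike E R R'] [RingEquivClass E R R'] (h : IsColonPrime I p)
    (e : E) : IsColonPrime (I.map e) (p.map e) :=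
  h.map_of_surjective (EquivLike.surjective e) (by simp)

lemma map_of_isLocalization [Algebra R R'] (M : Submonoid R) [IsLocalization M R']
    (h : IsColonPrime I p) (hM : Disjoint (M : Set R) p) :
    IsColonPrime (I.map (algebraMap R R')) (p.map (algebraMap R R')) := by
  obtain ⟨f, hf⟩ := h.exists_mem_iff
  refine ⟨IsLocalization.isPrime_of_isPrime_disjoint M R' p h.isPrime hM, algebraMap R R' f,
    fun r' => ?_⟩
  obtain ⟨r, s, rfl⟩ := IsLocalization.exists_mk'_eq M r'
  have hmul : IsLocalization.mk' R' r s * algebraMap R R' f = IsLocalization.mk' R' (r * f) s := by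
    rw [IsLocalization.eq_mk'_iff_mul_eq, mul_right_comm, IsLocalization.mk'_spec, map_mul]
  simp only [hmul, IsLocalization.mk'_mem_map_algebraMap_iff, hf, mul_assoc]

lemma height_le_height_map_add {F : Type*} [FunLike F R R'] [RingHomClass F R R']
    [IsNoetherianRing R] (h : IsColonPrime I p) {φ : F} (hφ : Function.Surjective φ)
    (hI : RingHom.ker φ ≤ I) : p.height ≤ (p.map φ).height + (RingHom.ker φ).spanFinrank := by
  have := h.isPrime
  change p.height ≤ (p.map (φ : R →+* R')).height + (RingHom.ker (φ : R →+* R')).spanFinrank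
  replace hφ : Function.Surjective (φ : R →+* R') := hφ
  replace hI : RingHom.ker (φ : R →+* R') ≤ I := hI
  generalize (φ : R →+* R') = ψ at *
  let e := RingHom.quotientKerEquivOfSurjective hφ
  have hψ : ψ = e.toRingHom.comp (Ideal.Quotient.mk (RingHom.ker ψ)) := rfl
  have hmap : p.map ψ = (p.map (Ideal.Quotient.mk (RingHom.ker ψ))).map e := by
    conv_lhs => rw [hψ, ← Ideal.map_map]
    rfl
  rw [hmap, RingEquiv.height_map]
  exact Ideal.height_le_height_add_spanFinrank_of_le (hI.trans h.le)

end CommRing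

section UniqueFactorizationMonoid

variable {R : Type*} [CommRing R] [IsDomain R] [UniqueFactorizationMonoid R] {p : Ideal R} {d : R}

lemma isPrincipal_of_span_singleton (hd : d ≠ 0) (h : IsColonPrime (Ideal.span {d}) p) :
    p.IsPrincipal := by
  obtain ⟨f, hf⟩ := h.exists_mem_iff
  obtain ⟨d', f', c, hrel, rfl, rfl⟩ := UniqueFactorizationMonoid.exists_reduced_factors d hd f
  refine ⟨d', Ideal.ext fun r => ?_⟩
  rw [hf, Ideal.mem_span_singleton, mul_left_comm, mul_dvd_mul_iff_left (left_ne_zero_of_mul hd),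
    Ideal.submodule_span_eq, Ideal.mem_span_singleton]
  exact ⟨hrel.dvd_of_dvd_mul_right, fun h => h.mul_right f'⟩

lemma height_le_one_or_of_span_singleton_mul [IsNoetherianRing R] {I : Ideal R} (hd : d ≠ 0)
    (h : IsColonPrime (Ideal.span {d} * I) p) : p.height ≤ 1 ∨ IsColonPrime I p := by
  have hp := h.isPrime
  obtain ⟨f, hf⟩ := h.exists_mem_iff
  by_cases hdvd : ∃ r, r ∉ p ∧ d ∣ r * f
  · obtain ⟨r, hr, g, hg⟩ := hdvd
    refine .inr ⟨hp, g, fun t => ?_⟩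
    calc t ∈ p ↔ t * r ∈ p := (hp.mul_mem_right_iff hr).symm
      _ ↔ d * (t * g) ∈ Ideal.span {d} * I := by rw [hf, mul_assoc, hg, mul_left_comm]
      _ ↔ t * g ∈ I := by
        simp only [Ideal.mem_span_singleton_mul, mul_right_inj' hd, exists_eq_right]
  · push Not at hdvd
    have hcolon : IsColonPrime (Ideal.span {d}) p := by
      refine ⟨hp, f, fun r => ⟨fun hr => Ideal.mul_le_left ((hf r).1 hr), fun hr => ?_⟩⟩
      by_contra hrp
      exact hdvd r hrp (Ideal.mem_span_singleton.1 hr)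
    have := hcolon.isPrincipal_of_span_singleton hd
    refine .inl (Ideal.height_le_one_of_isPrincipal_of_mem_minimalPrimes p p ?_)
    rw [Ideal.minimalPrimes_eq_subsingleton_self]
    rfl

end UniqueFactorizationMonoid

end IsColonPrime

open MvPolynomial

section TotalDegreeLEOne

variable {τ τ' V : Type*}

section CommSemiring

variable [CommSemiring V]

lemma totalDegree_C_add_sum_C_mul_X_le_one [Fintype τ] (c : V) (l : τ → V) :
    (C c + ∑ i, C (l i) * X i : MvPolynomial τ V).totalDegree ≤ 1 := by
  rw [← mem_restrictTotalDegree]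
  refine add_mem ?_ (sum_mem fun i _ => ?_)
  · simp [mem_restrictTotalDegree]
  · rw [← smul_eq_C_mul]
    exact Submodule.smul_mem _ _
      ((mem_restrictTotalDegree ..).2 (isHomogeneous_X V i).totalDegree_le)

lemma eq_C_add_sum_C_mul_X_of_totalDegree_le_one [Fintype τ] {f : MvPolynomial τ V}
    (hf : f.totalDegree ≤ 1) :
    f = C (coeff 0 f) + ∑ i, C (coeff (Finsupp.single i 1) f) * X i := by
  classical
  ext m
  obtain hm | hm | hm : m.degree = 0 ∨ m.degree = 1 ∨ 1 < m.degree := by omega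
  · obtain rfl := (Finsupp.degree_eq_zero_iff m).1 hm
    simp [coeff_sum, coeff_C_mul, coeff_zero_X]
  · obtain ⟨i, rfl⟩ := (Finsupp.sum_eq_one_iff m).1 hm
    simp [coeff_sum, coeff_C, coeff_X, Finsupp.single_left_inj, eq_comm (a := (0 : τ →₀ ℕ))]
  · rw [coeff_eq_zero_of_totalDegree_lt (hf.trans_lt hm), coeff_eq_zero_of_totalDegree_lt
      ((totalDegree_C_add_sum_C_mul_X_le_one _ _).trans_lt hm)]

lemma totalDegree_algHom_le_one [Finite τ] {φ : MvPolynomial τ V →ₐ[V] MvPolynomial τ' V}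
    (hφ : ∀ i, (φ (X i)).totalDegree ≤ 1) {f : MvPolynomial τ V} (hf : f.totalDegree ≤ 1) :
    (φ f).totalDegree ≤ 1 := by
  cases nonempty_fintype τ
  simp only [← mem_restrictTotalDegree] at hφ
  rw [eq_C_add_sum_C_mul_X_of_totalDegree_le_one hf, ← mem_restrictTotalDegree, map_add, map_sum]
  refine add_mem ?_ (sum_mem fun i _ => ?_)
  · rw [← algebraMap_eq, AlgHom.commutes, algebraMap_eq, mem_restrictTotalDegree, totalDegree_C]
    exact zero_le_one
  · rw [← smul_eq_C_mul, map_smul]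
    exact Submodule.smul_mem _ _ (hφ i)

lemma exists_eq_C_mul_X_add_rename [Finite τ] {g : MvPolynomial τ V} (hg : g.totalDegree ≤ 1)
    (j : τ) : ∃ r : MvPolynomial {i // i ≠ j} V, r.totalDegree ≤ 1 ∧
      g = C (coeff (Finsupp.single j 1) g) * X j + rename Subtype.val r := by
  classical
  cases nonempty_fintype τ
  refine ⟨_, totalDegree_C_add_sum_C_mul_X_le_one (coeff 0 g)
    fun i => coeff (Finsupp.single i.1 1) g, ?_⟩
  conv_lhs => rw [eq_C_add_sum_C_mul_X_of_totalDegree_le_one hg,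
    Fintype.sum_eq_add_sum_subtype_ne _ j, add_left_comm]
  simp only [map_add, map_sum, map_mul, rename_C, rename_X]

end CommSemiring

variable [CommRing V]

lemma ker_eq_of_sub_mem {A : Type*} [CommRing A] [Algebra V A] {φ : MvPolynomial τ V →ₐ[V] A}
    (ψ : A →ₐ[V] MvPolynomial τ V) {J : Ideal (MvPolynomial τ V)} (hJ : J ≤ RingHom.ker φ)
    (h : ∀ i, X i - ψ (φ (X i)) ∈ J) : RingHom.ker φ = J := by
  refine le_antisymm (fun f hf => ?_) hJ
  have hcomp : (Ideal.Quotient.mkₐ V J).comp (ψ.comp φ) = Ideal.Quotient.mkₐ V J :=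
    MvPolynomial.algHom_ext fun i => ((Ideal.Quotient.mk_eq_mk_iff_sub_mem _ _).2 (h i)).symm
  have hf' := DFunLike.congr_fun hcomp f
  rw [AlgHom.comp_apply, AlgHom.comp_apply, RingHom.mem_ker.1 hf, map_zero, map_zero] at hf'
  exact Ideal.Quotient.eq_zero_iff_mem.1 hf'.symm

lemma ker_aeval_zero (κ k : Type*) [CommRing k] :
    RingHom.ker (aeval (0 : κ → k)) = Ideal.span (Set.range (X : κ → MvPolynomial κ k)) := by
  refine ker_eq_of_sub_mem (Algebra.ofId _ _) (Ideal.span_le.2 ?_) fun i => ?_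
  · rintro _ ⟨i, rfl⟩
    exact aeval_X 0 i
  · simpa using Ideal.subset_span (Set.mem_range_self i)

lemma exists_algHom_ker_eq_span_singleton_s14 [Finite τ] {g : MvPolynomial τ V}
    (hg : g.totalDegree ≤ 1) {j : τ} (hj : IsUnit (coeff (Finsupp.single j 1) g)) :
    ∃ φ : MvPolynomial τ V →ₐ[V] MvPolynomial {i // i ≠ j} V, Function.Surjective φ ∧
      RingHom.ker φ = Ideal.span {g} ∧
      ∀ f : MvPolynomial τ V, f.totalDegree ≤ 1 → (φ f).totalDegree ≤ 1 := by
  classical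
  obtain ⟨u, hu⟩ := hj.exists_left_inv
  have hCu : C u * C (coeff (Finsupp.single j 1) g) = (1 : MvPolynomial τ V) := by
    rw [← C_mul, hu, C_1]
  obtain ⟨r, hr, hg_eq⟩ := exists_eq_C_mul_X_add_rename hg j
  let φ : MvPolynomial τ V →ₐ[V] MvPolynomial {i // i ≠ j} V :=
    aeval fun i => if h : i = j then -(C u * r) else X ⟨i, h⟩
  have hφj : φ (X j) = -(C u * r) := by simp [φ]
  have hφ (i : {i // i ≠ j}) : φ (X i) = X i := by simp [φ, i.2]
  have hφr (f) : φ (rename Subtype.val f) = f := by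
    have : φ.comp (rename Subtype.val) = AlgHom.id V _ :=
      MvPolynomial.algHom_ext fun i => by simp [hφ]
    exact DFunLike.congr_fun this f
  refine ⟨φ, fun f => ⟨_, hφr f⟩, ker_eq_of_sub_mem (rename Subtype.val) ?_ fun i => ?_,
    fun f => totalDegree_algHom_le_one fun i => ?_⟩
  · rw [Ideal.span_singleton_le_iff_mem, RingHom.mem_ker, hg_eq]
    have hCu' := congr_arg φ hCu
    simp only [map_add, map_mul, hφj, hφr, ← algebraMap_eq, AlgHom.commutes, map_one] at hCu' ⊢
    linear_combination -r * hCu'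
  · by_cases hi : i = j
    · subst hi
      refine Ideal.mem_span_singleton.2 ⟨C u, ?_⟩
      rw [hφj, map_neg, map_mul, rename_C]
      linear_combination -X i * hCu - C u * hg_eq
    · simp [hφ ⟨i, hi⟩]
  · by_cases hi : i = j
    · rw [hi, hφj, totalDegree_neg, ← smul_eq_C_mul]
      exact (totalDegree_smul_le _ _).trans hr
    · rw [hφ ⟨i, hi⟩]
      exact (isHomogeneous_X V _).totalDegree_le

end TotalDegreeLEOne

lemma span_range_mul_left {R ι : Type*} [CommSemiring R] (d : R) (g : ι → R) :
    Ideal.span (Set.range fun i => d * g i) = Ideal.span {d} * Ideal.span (Set.range g) := by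
  rw [Ideal.span_mul_span', Set.singleton_mul, ← Set.range_comp]
  rfl

lemma exists_coeff_dvd_coeff {τ V ι : Type*} [CommRing V] [IsDomain V] [ValuationRing V] [Finite ι]
    [Nonempty ι] (g : ι → MvPolynomial τ V) :
    ∃ i₀ m₀, ∀ i m, coeff m₀ (g i₀) ∣ coeff m (g i) := by
  classical
  cases nonempty_fintype ι
  have hdir : Directed (Function.swap (· ∣ ·)) fun x : ι × (τ →₀ ℕ) => coeff x.2 (g x.1) :=
    fun x y => (ValuationRing.dvd_total (coeff x.2 (g x.1)) (coeff y.2 (g y.1))).elim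
      (fun h => ⟨x, dvd_rfl, h⟩) (fun h => ⟨y, h, dvd_rfl⟩)
  have : IsTrans V (Function.swap (· ∣ ·)) := ⟨fun _ _ _ h h' => h'.trans h⟩
  obtain ⟨⟨i₀, m₀⟩, h⟩ := hdir.finset_le
    (Finset.univ.biUnion fun i => (g i).support.image fun m => (i, m))
  refine ⟨i₀, m₀, fun i m => ?_⟩
  by_cases hm : m ∈ (g i).support
  · exact h (i, m) (by simpa using hm)
  · simp [notMem_support_iff.1 hm]

lemma exists_eq_C_mul_and_isUnit_coeff {τ V ι : Type*} [CommRing V] [IsDomain V] [ValuationRing V]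
    [Finite ι] {g : ι → MvPolynomial τ V} (hg : ∃ i, g i ≠ 0) :
    ∃ (d : V) (g' : ι → MvPolynomial τ V), d ≠ 0 ∧ (∀ i, g i = C d * g' i) ∧
      ∃ i m, IsUnit (coeff m (g' i)) := by
  obtain ⟨i₁, hi₁⟩ := hg
  have : Nonempty ι := ⟨i₁⟩
  obtain ⟨i₀, m₀, hdvd⟩ := exists_coeff_dvd_coeff g
  have hd : coeff m₀ (g i₀) ≠ 0 := fun hd => hi₁ <| by
    ext m
    simpa [hd] using hdvd i₁ m
  choose g' hg' using fun i => (C_dvd_iff_dvd_coeff _ _).2 (hdvd i)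
  refine ⟨_, g', hd, hg', i₀, m₀, ?_⟩
  have hcoeff := congr_arg (coeff m₀) (hg' i₀)
  rw [coeff_C_mul, eq_comm, mul_eq_left₀ hd] at hcoeff
  exact hcoeff ▸ isUnit_one

lemma exists_isUnit_coeff_single {τ V : Type*} [Finite τ] [CommRing V] [IsLocalRing V]
    {p : Ideal (MvPolynomial τ V)} (hp : p ≠ ⊤)
    (hmax : ∀ c ∈ IsLocalRing.maximalIdeal V, C c ∈ p) {g : MvPolynomial τ V}
    (hg : g.totalDegree ≤ 1) (hgp : g ∈ p) {m : τ →₀ ℕ} (hm : IsUnit (coeff m g)) :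
    ∃ j, IsUnit (coeff (Finsupp.single j 1) g) := by
  cases nonempty_fintype τ
  by_contra! hlin
  have hsum : ∑ i, C (coeff (Finsupp.single i 1) g) * X i ∈ p :=
    Ideal.sum_mem _ fun i _ => p.mul_mem_right _ (hmax _ (hlin i))
  rw [eq_C_add_sum_C_mul_X_of_totalDegree_le_one hg, Ideal.add_mem_iff_left _ hsum] at hgp
  have hconst : ¬IsUnit (coeff 0 g) := fun h => hp (Ideal.eq_top_of_isUnit_mem _ hgp (h.map C))
  obtain h0 | h1 | h2 : m.degree = 0 ∨ m.degree = 1 ∨ 1 < m.degree := by omega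
  · exact hconst ((Finsupp.degree_eq_zero_iff m).1 h0 ▸ hm)
  · obtain ⟨i, rfl⟩ := (Finsupp.sum_eq_one_iff m).1 h1
    exact hlin i hm
  · rw [coeff_eq_zero_of_totalDegree_lt (hg.trans_lt h2)] at hm
    exact not_isUnit_zero hm

namespace IsColonPrime

lemma exists_algHom_of_isUnit_coeff {τ V ι : Type*} [Finite τ] [CommRing V] [IsNoetherianRing V]
    {g : ι → MvPolynomial τ V} {p : Ideal (MvPolynomial τ V)}
    (h : IsColonPrime (Ideal.span (Set.range g)) p) {i₀ : ι} (hg : (g i₀).totalDegree ≤ 1) {j : τ}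
    (hj : IsUnit (coeff (Finsupp.single j 1) (g i₀))) :
    ∃ φ : MvPolynomial τ V →ₐ[V] MvPolynomial {i // i ≠ j} V,
      (∀ f : MvPolynomial τ V, f.totalDegree ≤ 1 → (φ f).totalDegree ≤ 1) ∧ φ (g i₀) = 0 ∧
      IsColonPrime (Ideal.span (Set.range fun i : {i // i ≠ i₀} => φ (g i))) (p.map φ) ∧
      p.height ≤ (p.map φ).height + 1 := by
  obtain ⟨φ, hsurj, hker, hdeg⟩ := exists_algHom_ker_eq_span_singleton_s14 hg hj
  have hφg : φ (g i₀) = 0 := RingHom.mem_ker.1 (hker ▸ Ideal.mem_span_singleton_self _)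
  have hkerle : RingHom.ker φ ≤ Ideal.span (Set.range g) := by
    rw [hker, Ideal.span_singleton_le_iff_mem]
    exact Ideal.subset_span (Set.mem_range_self i₀)
  have hmap : (Ideal.span (Set.range g)).map φ =
      Ideal.span (Set.range fun i : {i // i ≠ i₀} => φ (g i)) := by
    rw [Ideal.map_span, ← Set.range_comp]
    refine le_antisymm (Ideal.span_le.2 (Set.range_subset_iff.2 fun i => ?_))
      (Ideal.span_mono (Set.range_subset_iff.2 fun i => ⟨i, rfl⟩))
    by_cases hi : i = i₀
    · simp [hi, hφg]
    · exact Ideal.subset_span ⟨⟨i, hi⟩, rfl⟩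
  refine ⟨φ, hdeg, hφg, hmap ▸ h.map_of_surjective hsurj hkerle, ?_⟩
  refine (h.height_le_height_map_add hsurj hkerle).trans ?_
  have : (RingHom.ker φ).spanFinrank ≤ 1 := by
    rw [hker]
    simpa using Submodule.spanFinrank_span_le_ncard_of_finite (Set.finite_singleton (g i₀))
  gcongr
  exact_mod_cast this

section IsPrincipalIdealRing

variable {τ V ι : Type*} [Finite τ] [CommRing V] [IsDomain V] [IsLocalRing V]
  [IsPrincipalIdealRing V] [Finite ι] {p : Ideal (MvPolynomial τ V)}

-- Divide all generators by a coefficient of least valuation. Then some generator has a unit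
-- coefficient; if it lies in `p`, one of its linear coefficients is a unit and it eliminates a
-- variable.
theorem height_le_card {g : ι → MvPolynomial τ V} (hg : ∀ i, (g i).totalDegree ≤ 1)
    (h : IsColonPrime (Ideal.span (Set.range g)) p)
    (hmax : ∀ c ∈ IsLocalRing.maximalIdeal V, C c ∈ p) : p.height ≤ Nat.card ι := by
  induction hn : Nat.card ι using Nat.strong_induction_on generalizing τ ι with | _ n ih
  subst hn
  by_cases hg0 : ∃ i, g i ≠ 0
  swap
  · have : Ideal.span (Set.range g) = ⊥ := by
      simpa [Ideal.span_eq_bot] using hg0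
    exact (h.height_eq_zero this).le.trans zero_le
  have : ValuationRing V := ValuationRing.iff_local_bezout_domain.2 ⟨inferInstance, inferInstance⟩
  obtain ⟨d, g', hd, hgg', i₀, m₀, hunit⟩ := exists_eq_C_mul_and_isUnit_coeff hg0
  have hcard : Nat.card {i // i ≠ i₀} < Nat.card ι := Finite.card_subtype_lt (not_not.2 rfl)
  obtain rfl : g = fun i => C d * g' i := funext hgg'
  rw [span_range_mul_left] at h
  obtain hp1 | h := h.height_le_one_or_of_span_singleton_mul (C_ne_zero.2 hd)
  · exact hp1.trans (by exact_mod_cast (Nat.zero_le _).trans_lt hcard)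
  have hg' (i) : (g' i).totalDegree ≤ 1 := by
    by_cases hi : g' i = 0
    · simp [hi]
    · simpa [totalDegree_mul_of_isDomain (C_ne_zero.2 hd) hi] using hg i
  obtain ⟨j, hj⟩ := exists_isUnit_coeff_single h.isPrime.ne_top hmax (hg' i₀)
    (h.le (Ideal.subset_span ⟨i₀, rfl⟩)) hunit
  obtain ⟨φ, hφ, -, hφp, hheight⟩ := h.exists_algHom_of_isUnit_coeff (hg' i₀) hj
  refine hheight.trans ((add_le_add_left (ih _ hcard (fun i : {i // i ≠ i₀} => hφ _ (hg' i)) hφp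
    (fun c hc => ?_) rfl) 1).trans (by exact_mod_cast hcard))
  simpa [← algebraMap_eq] using Ideal.mem_map_of_mem φ (hmax c hc)

theorem height_le_card_of_common_factor {g : ι → MvPolynomial τ V} (d : MvPolynomial τ V)
    (hg : ∀ i, (g i).totalDegree ≤ 1)
    (h : IsColonPrime (Ideal.span (Set.range fun i => d * g i)) p)
    (hmax : ∀ c ∈ IsLocalRing.maximalIdeal V, C c ∈ p) : p.height ≤ Nat.card ι := by
  by_cases hbot : IsEmpty ι ∨ d = 0
  · have : Ideal.span (Set.range fun i => d * g i) = ⊥ := by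
      rcases hbot with _ | rfl <;> simp
    exact (h.height_eq_zero this).le.trans zero_le
  · rw [not_or, not_isEmpty_iff] at hbot
    have := hbot.1
    rw [span_range_mul_left] at h
    obtain hp1 | h := h.height_le_one_or_of_span_singleton_mul hbot.2
    · exact hp1.trans (by exact_mod_cast Nat.card_pos)
    · exact h.height_le_card hg hmax

-- Modulo `C c * x + C t * y`, with `c` a unit, `x` is a multiple of `y`, so that `y` becomes a
-- common factor of the remaining generators.
theorem height_le_card_of_isUnit {x y : MvPolynomial τ V} {a b : ι → MvPolynomial τ V}
    (hx : x.totalDegree ≤ 1) (hy : y.totalDegree ≤ 1)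
    (ha : ∀ i, (a i).totalDegree ≤ 1) (hb : ∀ i, (b i).totalDegree ≤ 1)
    (h : IsColonPrime (Ideal.span (Set.range fun i => a i * x + b i * y)) p)
    (hmax : ∀ c ∈ IsLocalRing.maximalIdeal V, C c ∈ p) {i₀ : ι} {c t : V}
    (hc : IsUnit c) (ha₀ : a i₀ = C c) (hb₀ : b i₀ = C t) {j : τ}
    (hj : IsUnit (coeff (Finsupp.single j 1) (C c * x + C t * y))) : p.height ≤ Nat.card ι := by
  have hq₀ : (a i₀ * x + b i₀ * y).totalDegree ≤ 1 := by
    simp only [← mem_restrictTotalDegree, ha₀, hb₀, ← smul_eq_C_mul] at hx hy ⊢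
    exact add_mem (Submodule.smul_mem _ c hx) (Submodule.smul_mem _ t hy)
  obtain ⟨φ, hφ, hφq₀, hφp, hheight⟩ := h.exists_algHom_of_isUnit_coeff hq₀ (by rwa [ha₀, hb₀])
  obtain ⟨w, hw⟩ := hc.exists_left_inv
  have hφC (v : V) : φ (C v) = C v := φ.commutes v
  have hCw : C w * C c = (1 : MvPolynomial {i // i ≠ j} V) := by rw [← C_mul, hw, C_1]
  simp only [map_add, map_mul, ha₀, hb₀, hφC] at hφq₀
  have hφx : φ x = -(C (w * t) * φ y) := by
    rw [C_mul]
    linear_combination C w * hφq₀ - φ x * hCw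
  have hfactor (i : {i // i ≠ i₀}) : φ (a i * x + b i * y) =
      φ y * (φ (b i) - C (w * t) * φ (a i)) := by
    rw [map_add, map_mul, map_mul, hφx]
    ring
  have hdeg (i : {i // i ≠ i₀}) : (φ (b i) - C (w * t) * φ (a i)).totalDegree ≤ 1 := by
    have hφa := hφ _ (ha i)
    have hφb := hφ _ (hb i)
    rw [← mem_restrictTotalDegree, ← smul_eq_C_mul] at *
    exact sub_mem hφb (Submodule.smul_mem _ _ hφa)
  simp only [hfactor] at hφp
  have hcard : Nat.card {i // i ≠ i₀} < Nat.card ι := Finite.card_subtype_lt (not_not.2 rfl)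
  refine hheight.trans ((add_le_add_left (hφp.height_le_card_of_common_factor _ hdeg
    fun v hv => ?_) 1).trans (by exact_mod_cast hcard))
  simpa only [hφC] using Ideal.mem_map_of_mem φ (hmax v hv)

end IsPrincipalIdealRing

end IsColonPrime

section Localization

lemma totalDegree_map_le {τ R R' : Type*} [CommSemiring R] [CommSemiring R'] (φ : R →+* R')
    (f : MvPolynomial τ R) : (f.map φ).totalDegree ≤ f.totalDegree :=
  Finset.sup_mono (support_map_subset _ _)

lemma isPrincipalIdealRing_localizationAtPrime {B : Type*} [CommRing B] [IsDomain B]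
    [IsNoetherianRing B] [IsIntegrallyClosed B] (P : Ideal B) [P.IsPrime] (hP : P.height ≤ 1) :
    IsPrincipalIdealRing (Localization.AtPrime P) := by
  have hclosed : IsIntegrallyClosed (Localization.AtPrime P) :=
    isIntegrallyClosed_of_isLocalization _ P.primeCompl P.primeCompl_le_nonZeroDivisors
  have hdim : Ring.KrullDimLE 1 (Localization.AtPrime P) := by
    rw [Ring.KrullDimLE, Order.krullDimLE_iff]
    exact (IsLocalization.AtPrime.ringKrullDim_eq_height P _).trans_le (by exact_mod_cast hP)
  refine ((tfae_of_isNoetherianRing_of_isLocalRing_of_isDomain _).out 0 3).2 ?_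
  exact ⟨hclosed, fun Q hQ₀ hQ =>
    IsLocalRing.eq_maximalIdeal (Ring.krullDimLE_one_iff_of_isPrime_bot.1 hdim Q hQ₀ hQ)⟩

namespace IsColonPrime

variable {τ B ι : Type*} [CommRing B] {p : Ideal (MvPolynomial τ B)}

attribute [local instance] MvPolynomial.algebraMvPolynomial in
lemma map_localizationAtPrime {g : ι → MvPolynomial τ B}
    (h : IsColonPrime (Ideal.span (Set.range g)) p) (P : Ideal B) [P.IsPrime] (hP : p.comap C = P) :
    let φ := MvPolynomial.map (σ := τ) (algebraMap B (Localization.AtPrime P))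
    IsColonPrime (Ideal.span (Set.range fun i => φ (g i))) (p.map φ) ∧
      p.height = (p.map φ).height ∧
      ∀ c ∈ IsLocalRing.maximalIdeal (Localization.AtPrime P), C c ∈ p.map φ := by
  intro φ
  have hp := h.isPrime
  have hdisj : Disjoint (P.primeCompl.map (C (σ := τ)) : Set (MvPolynomial τ B)) p := by
    rw [Set.disjoint_left]
    rintro _ ⟨c, hc, rfl⟩ hcp
    exact hc (hP.le hcp)
  have hmap := h.map_of_isLocalization
    (R' := MvPolynomial τ (Localization.AtPrime P)) (P.primeCompl.map C) hdisj
  rw [Ideal.map_span, ← Set.range_comp] at hmap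
  refine ⟨hmap, (IsLocalization.height_map_of_disjoint _ _ hdisj).symm, fun c hc => ?_⟩
  rw [← Localization.AtPrime.map_eq_maximalIdeal] at hc
  have hle : P.map (algebraMap B _) ≤ (p.map φ).comap C := by
    refine Ideal.map_le_iff_le_comap.2 fun v hv => ?_
    simpa [φ] using Ideal.mem_map_of_mem φ (show C v ∈ p from hP.ge hv)
  exact hle hc

variable [IsDomain B] [IsNoetherianRing B] [IsIntegrallyClosed B] [Finite τ] [Finite ι]

theorem height_le_card_of_height_comap_le_one {g : ι → MvPolynomial τ B}
    (hg : ∀ i, (g i).totalDegree ≤ 1) (h : IsColonPrime (Ideal.span (Set.range g)) p)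
    (hP : (p.comap C).height ≤ 1) : p.height ≤ Nat.card ι := by
  have := h.isPrime
  have := isPrincipalIdealRing_localizationAtPrime _ hP
  obtain ⟨hmap, hheight, hmax⟩ := h.map_localizationAtPrime _ rfl
  rw [hheight]
  exact hmap.height_le_card (fun i => (totalDegree_map_le _ _).trans (hg i)) hmax

theorem height_le_card_of_notMem {x y : MvPolynomial τ B} {a b : ι → MvPolynomial τ B}
    (hx : x.totalDegree ≤ 1) (hy : y.totalDegree ≤ 1)
    (ha : ∀ i, (a i).totalDegree ≤ 1) (hb : ∀ i, (b i).totalDegree ≤ 1)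
    (h : IsColonPrime (Ideal.span (Set.range fun i => a i * x + b i * y)) p)
    (hP : (p.comap C).height ≤ 1) {i₀ : ι} {c t : B} (hc : C c ∉ p) (ha₀ : a i₀ = C c)
    (hb₀ : b i₀ = C t) {j : τ} (hj : C (coeff (Finsupp.single j 1) (C c * x + C t * y)) ∉ p) :
    p.height ≤ Nat.card ι := by
  have := h.isPrime
  have := isPrincipalIdealRing_localizationAtPrime _ hP
  have hunit {v : B} (hv : C v ∉ p) :
      IsUnit (algebraMap B (Localization.AtPrime (p.comap C)) v) :=
    IsLocalization.map_units _ (⟨v, hv⟩ : (p.comap C).primeCompl)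
  have hdeg {f : MvPolynomial τ B} (hf : f.totalDegree ≤ 1) :=
    (totalDegree_map_le (algebraMap B (Localization.AtPrime (p.comap C))) f).trans hf
  obtain ⟨hmap, hheight, hmax⟩ := h.map_localizationAtPrime _ rfl
  simp only [map_add, map_mul] at hmap
  rw [hheight]
  refine hmap.height_le_card_of_isUnit (hdeg hx) (hdeg hy) (fun i => hdeg (ha i))
    (fun i => hdeg (hb i)) hmax (hunit hc) (by rw [ha₀, map_C]) (by rw [hb₀, map_C]) (j := j) ?_
  simpa only [← map_C, ← map_mul, ← map_add, coeff_map] using hunit hj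

end IsColonPrime

end Localization

section LinearForms

open Module

lemma exists_basis_sum_extending {ι κ K V : Type*} [Field K] [AddCommGroup V] [Module K V]
    [FiniteDimensional K V] {v : ι ⊕ κ → V} (hv : LinearIndependent K v) :
    ∃ (n : ℕ) (b : Basis ((ι ⊕ Fin n) ⊕ κ) K V), (∀ i, b (.inl (.inl i)) = v (.inl i)) ∧
      ∀ j, b (.inr j) = v (.inr j) := by
  obtain ⟨W, hW⟩ := (Submodule.span K (Set.range v)).exists_isCompl
  let b := ((Basis.span hv).prod (finBasis K W)).map (Submodule.prodEquivOfIsCompl _ W hW)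
  have hb (i) : b (.inl i) = v i := by simp [b, Basis.span_apply]
  let e := ((Equiv.sumComm ι κ).sumCongr (.refl _)).trans
    ((Equiv.sumAssoc κ ι (Fin (finrank K W))).trans (Equiv.sumComm ..))
  exact ⟨_, b.reindex e, fun i => (b.reindex_apply e _).trans (hb (.inl i)),
    fun j => (b.reindex_apply e _).trans (hb (.inr j))⟩

/-- The variables, as a basis of the space of linear forms. -/
noncomputable def linearFormBasis (σ k : Type*) [CommRing k] :
    Basis σ k (homogeneousSubmodule σ k 1) :=
  (Basis.span (linearIndependent_X σ k)).map
    (LinearEquiv.ofEq _ _ homogeneousSubmodule_one_eq_span_X.symm)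

variable {σ τ k ι κ : Type*}

section CommRing

variable [CommRing k]

lemma coe_linearFormBasis (i : σ) : (linearFormBasis σ k i : MvPolynomial σ k) = X i := by
  simp [linearFormBasis, Basis.span_apply]

/-- The linear change of coordinates for which the members of the basis `b` of the space of linear
forms become the variables. -/
noncomputable def changeOfCoordinates (b : Basis ι k (homogeneousSubmodule σ k 1)) :
    MvPolynomial σ k ≃ₐ[k] MvPolynomial ι k :=
  (SymmetricAlgebra.equivMvPolynomial (linearFormBasis σ k)).symm.trans
    (SymmetricAlgebra.equivMvPolynomial b)

lemma changeOfCoordinates_coe_basis (b : Basis ι k (homogeneousSubmodule σ k 1)) (i : ι) :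
    changeOfCoordinates b (b i) = X i := by
  have key : (SymmetricAlgebra.equivMvPolynomial (linearFormBasis σ k)).toLinearMap ∘ₗ
      SymmetricAlgebra.ι k _ = Submodule.subtype _ :=
    (linearFormBasis σ k).ext fun j => by simp [coe_linearFormBasis]
  rw [changeOfCoordinates, AlgEquiv.trans_apply,
    ← (AlgEquiv.eq_symm_apply _).2 (LinearMap.congr_fun key (b i)),
    SymmetricAlgebra.equivMvPolynomial_ι_apply]

/-- `Φ` presents `MvPolynomial σ k` as a polynomial ring over `MvPolynomial κ k` by a linear change
of coordinates for which the linear forms `v j` become the variables of the coefficient ring. -/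
structure IsAdapted (v : κ → MvPolynomial σ k)
    (Φ : MvPolynomial σ k ≃ₐ[k] MvPolynomial τ (MvPolynomial κ k)) : Prop where
  isHomogeneous : ∀ j, (v j).IsHomogeneous 1
  map_apply : ∀ j, Φ (v j) = C (X j)
  exists_map_eq : ∀ f : MvPolynomial σ k, f.IsHomogeneous 1 →
    ∃ l l', l.IsHomogeneous 1 ∧ l'.IsHomogeneous 1 ∧ Φ f = map C l + C l'

end CommRing

variable [Field k]

lemma exists_isAdapted_sum [Finite σ] {v : ι ⊕ κ → MvPolynomial σ k}
    (hv : LinearIndependent k v) (hv1 : ∀ i, (v i).IsHomogeneous 1) :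
    ∃ (n : ℕ) (Φ : MvPolynomial σ k ≃ₐ[k] MvPolynomial (ι ⊕ Fin n) (MvPolynomial κ k)),
      IsAdapted (v ∘ .inr) Φ ∧ ∀ i, Φ (v (.inl i)) = X (.inl i) := by
  have : FiniteDimensional k (homogeneousSubmodule σ k 1) := .of_basis (linearFormBasis σ k)
  let v' (i) : homogeneousSubmodule σ k 1 := ⟨v i, hv1 i⟩
  have hv' : LinearIndependent k v' := .of_comp (Submodule.subtype _) hv
  obtain ⟨n, b, hbι, hbκ⟩ := exists_basis_sum_extending hv'
  let Φ := (changeOfCoordinates b).trans (sumAlgEquiv k (ι ⊕ Fin n) κ)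
  have hinl (i) : Φ (b (.inl i)) = X i := by
    rw [AlgEquiv.trans_apply, changeOfCoordinates_coe_basis, sumAlgEquiv_X_inl]
  have hinr (j) : Φ (b (.inr j)) = C (X j) := by
    rw [AlgEquiv.trans_apply, changeOfCoordinates_coe_basis, sumAlgEquiv_X_inr]
  refine ⟨n, Φ, ⟨fun j => hv1 _, fun j => ?_, fun f hf => ?_⟩, fun i => by rw [← hinl, hbι]⟩
  · rw [← hinr, hbκ, Function.comp_apply]
  refine Submodule.span_induction (p := fun (f : homogeneousSubmodule σ k 1) _ =>
    ∃ l l', l.IsHomogeneous 1 ∧ l'.IsHomogeneous 1 ∧ Φ f = map C l + C l') ?_ ?_ ?_ ?_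
    (b.mem_span ⟨f, hf⟩)
  · rintro _ ⟨i | j, rfl⟩
    · exact ⟨X i, 0, isHomogeneous_X .., isHomogeneous_zero .., by simp [hinl]⟩
    · exact ⟨0, X j, isHomogeneous_zero .., isHomogeneous_X .., by simp [hinr]⟩
  · exact ⟨0, 0, isHomogeneous_zero .., isHomogeneous_zero .., by simp⟩
  · rintro f g - - ⟨l₁, l₁', h₁, h₁', hf⟩ ⟨l₂, l₂', h₂, h₂', hg⟩
    exact ⟨l₁ + l₂, l₁' + l₂', h₁.add h₂, h₁'.add h₂', by
      rw [Submodule.coe_add, map_add, hf, hg, map_add, C_add]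
      ring⟩
  · rintro c f - ⟨l, l', h, h', hf⟩
    have hC : Φ (C c) = C (C c) := Φ.commutes c
    exact ⟨C c * l, C c * l', h.C_mul c, h'.C_mul c, by simp [hf, smul_eq_C_mul, hC, mul_add]⟩

lemma exists_isAdapted [Finite σ] {v : κ → MvPolynomial σ k}
    (hv : LinearIndependent k v) (hv1 : ∀ j, (v j).IsHomogeneous 1) :
    ∃ (τ : Type) (_ : Finite τ) (Φ : MvPolynomial σ k ≃ₐ[k] MvPolynomial τ (MvPolynomial κ k)),
      IsAdapted v Φ := by
  obtain ⟨n, Φ, hΦ, -⟩ := exists_isAdapted_sum (v := v ∘ (Equiv.emptySum Empty κ))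
    (hv.comp _ (Equiv.injective _)) fun i => hv1 _
  exact ⟨_, inferInstance, Φ, hΦ⟩

lemma ideal_span_eq_of_span_eq {R A : Type*} [CommSemiring R] [CommSemiring A] [Algebra R A]
    {s t : Set A} (h : Submodule.span R s = Submodule.span R t) : Ideal.span s = Ideal.span t := by
  rw [Ideal.span, ← Submodule.span_span_of_tower R, h, Submodule.span_span_of_tower]

lemma exists_isAdapted_span_eq [Finite σ] {s : Set (MvPolynomial σ k)}
    (hs : ∀ f ∈ s, f.IsHomogeneous 1) :
    ∃ (B : Set (MvPolynomial σ k)) (τ : Type) (_ : Finite τ)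
      (Φ : MvPolynomial σ k ≃ₐ[k] MvPolynomial τ (MvPolynomial B k)),
      Submodule.span k B = Submodule.span k s ∧ IsAdapted ((↑) : B → MvPolynomial σ k) Φ := by
  obtain ⟨B, hBs, hspan, hB⟩ := exists_linearIndependent k s
  obtain ⟨τ, _, Φ, hΦ⟩ := exists_isAdapted hB fun j => hs _ (hBs j.2)
  exact ⟨B, τ, inferInstance, Φ, hspan, hΦ⟩

end LinearForms

section Homogeneous

variable {σ k : Type*}

attribute [local instance] MvPolynomial.gradedAlgebra

lemma coe_decompose_homogeneousSubmodule [CommSemiring k] (f : MvPolynomial σ k)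
    (n : ℕ) :
    (DirectSum.decompose (homogeneousSubmodule σ k) f n : MvPolynomial σ k) =
      homogeneousComponent n f :=
  decomposition.decompose'_apply f n

lemma homogeneousComponent_mul_homogeneousComponent [CommSemiring k] (n : ℕ)
    (r f : MvPolynomial σ k) :
    homogeneousComponent n (r * homogeneousComponent n f) =
      C (constantCoeff r) * homogeneousComponent n f := by
  have := DirectSum.coe_decompose_mul_add_of_right_mem (homogeneousSubmodule σ k) (i := 0) (a := r)
    (homogeneousComponent_mem n f)
  rwa [coe_decompose_homogeneousSubmodule, coe_decompose_homogeneousSubmodule, zero_add,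
    homogeneousComponent_zero, ← constantCoeff_eq] at this

lemma homogeneousComponent_mul_homogeneousComponent_of_lt [CommSemiring k] {n i : ℕ} (h : n < i)
    (r f : MvPolynomial σ k) : homogeneousComponent n (r * homogeneousComponent i f) = 0 := by
  rw [← coe_decompose_homogeneousSubmodule]
  exact DirectSum.coe_decompose_mul_of_right_mem_of_not_le (homogeneousSubmodule σ k)
    (homogeneousComponent_mem i f) h.not_ge

lemma IsColonPrime.constantCoeff_eq_zero [Field k] {I p : Ideal (MvPolynomial σ k)}
    (h : IsColonPrime I p) (hI : I.IsHomogeneous (homogeneousSubmodule σ k)) {r : MvPolynomial σ k}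
    (hr : r ∈ p) : constantCoeff r = 0 := by
  obtain ⟨f, hfI, hf⟩ := h.exists_notMem
  by_contra hr₀
  refine hfI ((mem_iff_homogeneousComponent_mem hI f).2 fun n => ?_)
  induction n using Nat.strong_induction_on with | _ n ih
  have hrf : ∑ i ∈ Finset.range (f.totalDegree + 1),
      homogeneousComponent n (r * homogeneousComponent i f) ∈ I := by
    rw [← map_sum, ← Finset.mul_sum, sum_homogeneousComponent]
    exact homogeneousComponent_mem_of_mem hI ((hf r).1 hr) n
  by_cases hn : n ∈ Finset.range (f.totalDegree + 1)
  swap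
  · rw [homogeneousComponent_eq_zero _ _ (by simpa using hn)]
    exact I.zero_mem
  rw [← Finset.add_sum_erase _ _ hn, homogeneousComponent_mul_homogeneousComponent,
    Ideal.add_mem_iff_left] at hrf
  · exact (I.unit_mul_mem_iff_mem ((isUnit_iff_ne_zero.2 hr₀).map C)).1 hrf
  · refine Ideal.sum_mem _ fun i hi => ?_
    obtain hlt | hlt := (Finset.ne_of_mem_erase hi).lt_or_gt
    · exact homogeneousComponent_mem_of_mem hI (I.mul_mem_left r (ih i hlt)) n
    · rw [homogeneousComponent_mul_homogeneousComponent_of_lt hlt]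
      exact I.zero_mem

end Homogeneous

namespace IsAdapted

variable {σ τ k κ : Type*} [CommRing k] {v : κ → MvPolynomial σ k}
  {Φ : MvPolynomial σ k ≃ₐ[k] MvPolynomial τ (MvPolynomial κ k)}

lemma totalDegree_le_one (hΦ : IsAdapted v Φ) {f : MvPolynomial σ k} (hf : f.IsHomogeneous 1) :
    (Φ f).totalDegree ≤ 1 := by
  obtain ⟨l, l', hl, -, h⟩ := hΦ.exists_map_eq f hf
  rw [h]
  refine (totalDegree_add _ _).trans (max_le ((hl.map C).totalDegree_le) ?_)
  rw [totalDegree_C]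
  exact zero_le_one

lemma exists_eq_C_of_mem_adjoin (hΦ : IsAdapted v Φ)
    {f : MvPolynomial σ k} (hf : f ∈ Algebra.adjoin k (Set.range v)) : ∃ t, Φ f = C t := by
  let Cₐ := IsScalarTower.toAlgHom k (MvPolynomial κ k) (MvPolynomial τ (MvPolynomial κ k))
  have hle : Algebra.adjoin k (Set.range v) ≤ Cₐ.range.comap (Φ : MvPolynomial σ k →ₐ[k] _) := by
    rw [Algebra.adjoin_le_iff]
    rintro _ ⟨j, rfl⟩
    exact ⟨X j, (hΦ.map_apply j).symm⟩
  obtain ⟨t, ht⟩ := hle hf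
  exact ⟨t, ht.symm⟩

lemma map_span_range (hΦ : IsAdapted v Φ) :
    (Ideal.span (Set.range v)).map Φ = (RingHom.ker (aeval (0 : κ → k))).map C := by
  rw [ker_aeval_zero, Ideal.map_span, Ideal.map_span, ← Set.range_comp, ← Set.range_comp]
  exact congr_arg (fun w => Ideal.span (Set.range w)) (funext hΦ.map_apply)

lemma constantCoeff_symm_C (hΦ : IsAdapted v Φ) (c : MvPolynomial κ k) :
    constantCoeff (Φ.symm (C c)) = constantCoeff c := by
  have : (constantCoeff.comp Φ.symm.toRingEquiv.toRingHom).comp C = constantCoeff := by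
    refine MvPolynomial.ringHom_ext (fun r => ?_) fun j => ?_
    · have hr : Φ.symm (C (C r)) = C r := Φ.symm.commutes r
      simp [hr]
    · simpa [← hΦ.map_apply, constantCoeff_eq] using
        (hΦ.isHomogeneous j).coeff_eq_zero (d := 0) (by simp)
  exact RingHom.congr_fun this c

lemma height_comap_le {k : Type*} [Field k] [Finite κ] {v : κ → MvPolynomial σ k}
    {Φ : MvPolynomial σ k ≃ₐ[k] MvPolynomial τ (MvPolynomial κ k)}
    {n : ℕ} (hκ : Nat.card κ ≤ n + 1) (hΦ : IsAdapted v Φ)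
    {p : Ideal (MvPolynomial σ k)} [p.IsPrime] (hp : ∀ r ∈ p, constantCoeff r = 0) {j : κ}
    (hj : v j ∉ p) : ((p.map Φ).comap C).height ≤ n := by
  have : (p.map Φ).IsPrime := Ideal.map_isPrime_of_equiv Φ
  let M := RingHom.ker (constantCoeff : MvPolynomial κ k →+* k)
  have hM : M.IsPrime := RingHom.ker_isPrime _
  have hlt : (p.map Φ).comap C < M := by
    refine lt_of_le_of_ne (fun c hc => ?_) fun heq => hj ?_
    · rw [RingHom.mem_ker, ← hΦ.constantCoeff_symm_C]
      refine hp _ ((map_equiv_mem_map_iff Φ).1 ?_)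
      rwa [AlgEquiv.apply_symm_apply]
    · rw [← map_equiv_mem_map_iff Φ, hΦ.map_apply, ← Ideal.mem_comap, heq]
      exact constantCoeff_X ..
  have hdim : (M.height : WithBot ℕ∞) ≤ Nat.card κ := by
    simpa [MvPolynomial.ringKrullDim_of_isNoetherianRing] using
      M.height_le_ringKrullDim_of_isPrime
  have hM_le : M.height ≤ n + 1 := (show M.height ≤ Nat.card κ by exact_mod_cast hdim).trans
    (by exact_mod_cast hκ)
  exact (ENat.add_le_add_iff_right ENat.one_ne_top).1
    ((Ideal.height_add_one_le_of_lt_of_isPrime hlt).trans hM_le)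

end IsAdapted

lemma exists_algHom_ker_eq_span_s14 {σ k : Type*} [Field k] [Finite σ] {Z : Set (MvPolynomial σ k)}
    (hZ : ∀ f ∈ Z, f.IsHomogeneous 1) :
    ∃ (τ : Type) (_ : Finite τ) (Θ : MvPolynomial σ k →ₐ[k] MvPolynomial τ k),
      Function.Surjective Θ ∧ RingHom.ker Θ = Ideal.span Z ∧
        ∀ f : MvPolynomial σ k, f.IsHomogeneous 1 → (Θ f).IsHomogeneous 1 := by
  obtain ⟨B, τ, _, Φ, hspan, hΦ⟩ := exists_isAdapted_span_eq hZ
  let ε : MvPolynomial B k →ₐ[k] k := aeval 0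
  let Θ : MvPolynomial σ k →ₐ[k] MvPolynomial τ k := (mapAlgHom ε).comp Φ
  have hε : Function.Surjective (mapAlgHom (σ := τ) ε) :=
    map_surjective _ fun c => ⟨C c, aeval_C _ _⟩
  refine ⟨τ, inferInstance, Θ, hε.comp Φ.surjective, Ideal.ext fun f => ?_, fun f hf => ?_⟩
  · calc f ∈ RingHom.ker Θ ↔ Φ f ∈ RingHom.ker (mapAlgHom ε) := Iff.rfl
      _ ↔ f ∈ Ideal.span Z := by
        rw [ker_mapAlgHom, ← hΦ.map_span_range, map_equiv_mem_map_iff,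
          Subtype.range_coe, ideal_span_eq_of_span_eq hspan]
  · obtain ⟨l, l', hl, hl', hfl⟩ := hΦ.exists_map_eq f hf
    have hεl' : ε l' = 0 := by
      simpa [ε, constantCoeff_eq] using hl'.coeff_eq_zero (d := 0) (by simp)
    have hεC : (ε : MvPolynomial B k →+* k).comp C = RingHom.id k := ε.comp_algebraMap
    have hΘf : Θ f = l := by
      change map (ε : MvPolynomial B k →+* k) (Φ f) = l
      rw [hfl, map_add, map_map, hεC, map_id, map_C, RingHom.coe_coe, hεl', C_0, add_zero]
    rwa [hΘf]

section Extension

lemma eq_zero_of_map_algebraMap_mul_eq_zero {τ k B : Type*} [Field k] [CommRing B] [Algebra k B]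
    {g : MvPolynomial τ k} (hg : g ≠ 0) {f : MvPolynomial τ B}
    (h : g.map (algebraMap k B) * f = 0) : f = 0 := by
  nontriviality B
  obtain ⟨_, _⟩ := exists_wellFoundedGT τ
  let m : MonomialOrder τ := MonomialOrder.lex
  have hdeg : m.degree (g.map (algebraMap k B)) = m.degree g := by
    simp [MonomialOrder.degree, support_map_of_injective _ (algebraMap k B).injective]
  have hunit : IsRegular (m.leadingCoeff (g.map (algebraMap k B))) := by
    rw [MonomialOrder.leadingCoeff, hdeg, coeff_map]
    exact ((isUnit_iff_ne_zero.2 (m.leadingCoeff_ne_zero_iff.2 hg)).map _).isRegular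
  by_contra hf
  have := m.leadingCoeff_mul_of_isRegular_left (g := f) hunit
  rw [h, m.leadingCoeff_zero, eq_comm, hunit.left.mul_left_eq_zero_iff,
    m.leadingCoeff_eq_zero_iff] at this
  exact hf this

lemma IsColonPrime.eq_map_ker {τ k A : Type*} [Field k] [CommRing A] [Algebra k A] (ε : A →ₐ[k] k)
    {I₀ : Ideal A} {p : Ideal (MvPolynomial τ A)} (h : IsColonPrime (I₀.map C) p)
    (hp : (RingHom.ker ε).map C ≤ p) : p = (RingHom.ker ε).map C := by
  refine le_antisymm (fun r hr => ?_) hp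
  rw [← ker_mapAlgHom] at hp ⊢
  by_contra hr₀
  obtain ⟨f, hfI, hf⟩ := h.exists_notMem
  -- `r₀` is a nonzero polynomial over the field `k`, hence a nonzerodivisor modulo `I₀.map C`.
  let r₀ := (mapAlgHom ε r).map (algebraMap k A)
  have hr₀p : r₀ ∈ p := by
    rw [← p.sub_mem_iff_right hr]
    refine hp ?_
    have : (ε : A →+* k).comp (algebraMap k A) = .id k := RingHom.ext ε.commutes
    rw [RingHom.mem_ker, map_sub, sub_eq_zero]
    change mapAlgHom ε r = map (ε : A →+* k) (map (algebraMap k A) (mapAlgHom ε r))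
    rw [MvPolynomial.map_map, this, MvPolynomial.map_id]
  rw [hf] at hr₀p
  refine hfI ?_
  rw [← Ideal.mk_ker (I := I₀), ← MvPolynomial.ker_map, RingHom.mem_ker] at hr₀p ⊢
  refine eq_zero_of_map_algebraMap_mul_eq_zero hr₀ ?_
  rw [map_mul, MvPolynomial.map_map] at hr₀p
  exact hr₀p

theorem IsColonPrime.eq_span_of_subset {σ k : Type*} [Finite σ] [Field k]
    {s T : Set (MvPolynomial σ k)} {p : Ideal (MvPolynomial σ k)}
    (hs : ∀ f ∈ s, f.IsHomogeneous 1) (hT : T ⊆ Algebra.adjoin k s)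
    (h : IsColonPrime (Ideal.span T) p) (hsp : s ⊆ p) : p = Ideal.span s := by
  obtain ⟨B, τ, _, Φ, hspan, hΦ⟩ := exists_isAdapted_span_eq hs
  have hmaps : (Ideal.span s).map Φ = (RingHom.ker (aeval (0 : B → k))).map C := by
    rw [← hΦ.map_span_range, Subtype.range_coe, ideal_span_eq_of_span_eq hspan]
  have hT' : ∀ f ∈ T, ∃ t, Φ f = C t := fun f hf => hΦ.exists_eq_C_of_mem_adjoin <| by
    rw [Subtype.range_coe, ← Algebra.adjoin_span, hspan, Algebra.adjoin_span]
    exact hT hf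
  have hI : (Ideal.span T).map Φ = (Ideal.span {t | ∃ f ∈ T, Φ f = C t}).map C := by
    rw [Ideal.map_span, Ideal.map_span]
    congr 1
    ext f
    constructor
    · rintro ⟨g, hg, rfl⟩
      obtain ⟨t, ht⟩ := hT' g hg
      exact ⟨t, ⟨g, hg, ht⟩, ht.symm⟩
    · rintro ⟨t, ⟨g, hg, ht⟩, rfl⟩
      exact ⟨g, hg, ht⟩
  have hmap := h.map_equiv Φ
  rw [hI] at hmap
  refine (map_inj_of_ker_le Φ.surjective (by simp) (by simp)).1 (Eq.trans ?_ hmaps.symm)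
  exact hmap.eq_map_ker _ (hmaps.ge.trans (Ideal.map_mono (Ideal.span_le.2 hsp)))

end Extension

section Quadrics

lemma linearIndependent_vecCons_of_notMem {R k : Type*} [Field k] [CommRing R] [Algebra k R]
    {p : Ideal R} {n : ℕ} {v : Fin n → R} (hv : LinearIndependent k v) (hvp : ∀ i, v i ∈ p) {f : R}
    (hf : f ∉ p) : LinearIndependent k (Matrix.vecCons f v) := by
  refine linearIndependent_finCons.2 ⟨hv, fun hspan => hf ?_⟩
  have hle : Submodule.span k (Set.range v) ≤ p.restrictScalars k :=
    Submodule.span_le.2 (Set.range_subset_iff.2 hvp)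
  exact hle hspan

namespace IsColonPrime

variable {σ k ι : Type*} [Field k] {x y : MvPolynomial σ k} {a b : ι → MvPolynomial σ k}
  {p : Ideal (MvPolynomial σ k)}

attribute [local instance] MvPolynomial.gradedAlgebra in
lemma constantCoeff_eq_zero_of_quadrics (hx : x.IsHomogeneous 1) (hy : y.IsHomogeneous 1)
    (ha : ∀ i, (a i).IsHomogeneous 1) (hb : ∀ i, (b i).IsHomogeneous 1)
    (h : IsColonPrime (Ideal.span (Set.range fun i => a i * x + b i * y)) p) :
    ∀ r ∈ p, constantCoeff r = 0 := by
  have hI : (Ideal.span (Set.range fun i => a i * x + b i * y)).IsHomogeneous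
      (homogeneousSubmodule σ k) := Ideal.homogeneous_span _ _ <| by
    rintro _ ⟨i, rfl⟩
    exact ⟨1 + 1, ((ha i).mul hx).add ((hb i).mul hy)⟩
  exact fun r => h.constantCoeff_eq_zero hI

variable [Finite σ] [Finite ι]

lemma height_le_card_of_not_linearIndependent (ha : ∀ i, (a i).IsHomogeneous 1)
    (hb : ∀ i, (b i).IsHomogeneous 1)
    (h : IsColonPrime (Ideal.span (Set.range fun i => a i * x + b i * y)) p)
    (hxy : ¬LinearIndependent k ![x, y]) : p.height ≤ Nat.card ι := by
  have hmax : ∀ c ∈ IsLocalRing.maximalIdeal k, C c ∈ p := by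
    simp [IsLocalRing.maximalIdeal_eq_bot]
  obtain rfl | hx₀ := eq_or_ne x 0
  · simp only [mul_zero, zero_add, mul_comm (b _)] at h
    exact h.height_le_card_of_common_factor y (fun i => (hb i).totalDegree_le) hmax
  · simp only [LinearIndependent.pair_iff' hx₀, not_forall, not_not] at hxy
    obtain ⟨c, rfl⟩ := hxy
    have hfactor (i) : a i * x + b i * c • x = x * (a i + C c * b i) := by
      rw [smul_eq_C_mul]
      ring
    simp only [hfactor] at h
    exact h.height_le_card_of_common_factor x
      (fun i => ((ha i).add ((hb i).C_mul c)).totalDegree_le) hmax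

lemma height_le_card_of_notMem_pair (hx : x.IsHomogeneous 1) (hy : y.IsHomogeneous 1)
    (ha : ∀ i, (a i).IsHomogeneous 1) (hb : ∀ i, (b i).IsHomogeneous 1)
    (h : IsColonPrime (Ideal.span (Set.range fun i => a i * x + b i * y)) p)
    (hxy : LinearIndependent k ![x, y]) {j : Fin 2} (hj : ![x, y] j ∉ p) :
    p.height ≤ Nat.card ι := by
  have := h.isPrime
  obtain ⟨τ, _, Φ, hΦ⟩ := exists_isAdapted hxy (Fin.forall_fin_two.2 ⟨hx, hy⟩)
  have hmap := h.map_equiv Φ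
  have hΦx : Φ x = C (X 0) := hΦ.map_apply 0
  have hΦy : Φ y = C (X 1) := hΦ.map_apply 1
  rw [Ideal.map_span, ← Set.range_comp] at hmap
  have hP := hΦ.height_comap_le (n := 1) (by simp)
    (h.constantCoeff_eq_zero_of_quadrics hx hy ha hb) hj
  rw [← RingEquiv.height_map Φ.toRingEquiv p]
  refine hmap.height_le_card_of_height_comap_le_one (fun i => ?_) (by exact_mod_cast hP)
  have hdeg {f : MvPolynomial σ k} (hf : f.IsHomogeneous 1) (c) : (Φ f * C c).totalDegree ≤ 1 := by
    simpa using (totalDegree_mul (Φ f) (C c)).trans (by simpa using hΦ.totalDegree_le_one hf)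
  rw [Function.comp_apply, map_add, map_mul, map_mul, hΦx, hΦy]
  exact (totalDegree_add _ _).trans (max_le (hdeg (ha i) _) (hdeg (hb i) _))

-- Over the localization of `k[v (.inr 0), v (.inr 1)]` at the trace of `p`, the coefficient `a i₀`
-- of the variable `x` in `a i₀ * x + b i₀ * y` is a unit.
lemma height_le_card_of_linearIndependent (ha : ∀ i, (a i).IsHomogeneous 1)
    (hb : ∀ i, (b i).IsHomogeneous 1)
    (h : IsColonPrime (Ideal.span (Set.range fun i => a i * x + b i * y)) p)
    {ι' : Type*} [Finite ι'] {v : ι' ⊕ Fin 2 → MvPolynomial σ k} (hv : LinearIndependent k v)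
    (hv1 : ∀ i, (v i).IsHomogeneous 1) {l : ι'} {r : ι' ⊕ Fin 2} (hr : r ≠ .inl l)
    (hx : v (.inl l) = x) (hy : v r = y) {i₀ : ι} (ha₀ : v (.inr 0) = a i₀)
    (hb₀ : b i₀ ∈ Submodule.span k (Set.range (v ∘ .inr))) (hap : a i₀ ∉ p) :
    p.height ≤ Nat.card ι := by
  classical
  have := h.isPrime
  obtain ⟨n, Φ, hΦ, hΦl⟩ := exists_isAdapted_sum hv hv1
  have hmap := h.map_equiv Φ
  rw [Ideal.map_span, ← Set.range_comp] at hmap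
  simp only [Function.comp_def, map_add, map_mul] at hmap
  have hP := hΦ.height_comap_le (n := 1) (by simp)
    (h.constantCoeff_eq_zero_of_quadrics (hx ▸ hv1 _) (hy ▸ hv1 _) ha hb) (j := 0) (by simpa [ha₀])
  have hΦa₀ : Φ (a i₀) = C (X 0) := ha₀ ▸ hΦ.map_apply 0
  obtain ⟨t, ht⟩ := hΦ.exists_eq_C_of_mem_adjoin (Algebra.span_le_adjoin k _ hb₀)
  have hc : C (X 0) ∉ p.map Φ := by rwa [← hΦa₀, map_equiv_mem_map_iff]
  have hdeg {f : MvPolynomial σ k} (hf : f.IsHomogeneous 1) := hΦ.totalDegree_le_one hf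
  have hx1 : coeff (Finsupp.single (.inl l) 1) (Φ x) = 1 := by
    rw [← hx, hΦl, coeff_X, if_pos rfl]
  have hy0 : coeff (Finsupp.single (.inl l) 1) (Φ y) = 0 := by
    rw [← hy]
    obtain l' | j := r
    · rw [hΦl, coeff_X, if_neg (by simpa [Finsupp.single_left_inj] using hr)]
    · rw [show v (.inr j) = (v ∘ .inr) j from rfl, hΦ.map_apply, coeff_C,
        if_neg (Finsupp.single_ne_zero.2 one_ne_zero).symm]
  rw [← RingEquiv.height_map Φ.toRingEquiv p]
  exact hmap.height_le_card_of_notMem (hdeg (hx ▸ hv1 _)) (hdeg (hy ▸ hv1 _)) (fun i => hdeg (ha i))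
    (fun i => hdeg (hb i)) (by exact_mod_cast hP) hc hΦa₀ ht (j := .inl l)
    (by rwa [coeff_add, coeff_C_mul, coeff_C_mul, hx1, hy0, mul_one, mul_zero, add_zero])

-- With `b i₀ = γ • a i₀ + α • x + β • y`, replacing every pair `(a i, b i)` by
-- `(a i + C α * y, b i - C α * x)` changes no quadric and brings `b i₀` into the span of `a i₀`
-- and `y`.
lemma height_le_card_of_mem_span (hx : x.IsHomogeneous 1) (hy : y.IsHomogeneous 1)
    (ha : ∀ i, (a i).IsHomogeneous 1) (hb : ∀ i, (b i).IsHomogeneous 1)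
    (h : IsColonPrime (Ideal.span (Set.range fun i => a i * x + b i * y)) p)
    (hxy : LinearIndependent k ![x, y]) (hxyp : ∀ i, ![x, y] i ∈ p) {i₀ : ι} (hap : a i₀ ∉ p)
    (hspan : b i₀ ∈ Submodule.span k {a i₀, x, y}) : p.height ≤ Nat.card ι := by
  obtain ⟨γ, α, β, hb₀⟩ := Submodule.mem_span_triple.1 hspan
  let a' (i) := a i + C α * y
  let b' (i) := b i - C α * x
  have hq (i) : a i * x + b i * y = a' i * x + b' i * y := by
    simp only [a', b']
    ring
  simp only [hq] at h
  have ha' (i) : (a' i).IsHomogeneous 1 := (ha i).add (hy.C_mul α)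
  have hb' (i) : (b' i).IsHomogeneous 1 := (hb i).sub (hx.C_mul α)
  have hap' : a' i₀ ∉ p := (p.add_mem_iff_left (p.mul_mem_left _ (hxyp 1))).not.2 hap
  have hb₀' : b' i₀ = γ • a' i₀ + (β - γ * α) • y := by
    simp only [a', b', ← hb₀, smul_eq_C_mul, C_sub, C_mul]
    ring
  have hhom : ∀ j, (![a' i₀, x, y] j).IsHomogeneous 1 :=
    Fin.forall_fin_succ.2 ⟨ha' i₀, Fin.forall_fin_two.2 ⟨hx, hy⟩⟩
  refine h.height_le_card_of_linearIndependent ha' hb'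
    (v := ![a' i₀, x, y] ∘ (Sum.elim ![1] ![0, 2] : Fin 1 ⊕ Fin 2 → Fin 3))
    ((linearIndependent_vecCons_of_notMem hxy hxyp hap').comp _ (by decide))
    (fun _ => hhom _) (l := 0) (r := .inr 1) (by simp) rfl rfl rfl ?_ hap'
  rw [hb₀']
  exact add_mem (Submodule.smul_mem _ _ (Submodule.subset_span ⟨0, rfl⟩))
    (Submodule.smul_mem _ _ (Submodule.subset_span ⟨1, rfl⟩))

lemma height_le_card_of_notMem_span (hx : x.IsHomogeneous 1) (hy : y.IsHomogeneous 1)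
    (ha : ∀ i, (a i).IsHomogeneous 1) (hb : ∀ i, (b i).IsHomogeneous 1)
    (h : IsColonPrime (Ideal.span (Set.range fun i => a i * x + b i * y)) p)
    (hxy : LinearIndependent k ![x, y]) (hxyp : ∀ i, ![x, y] i ∈ p) {i₀ : ι} (hap : a i₀ ∉ p)
    (hspan : b i₀ ∉ Submodule.span k {a i₀, x, y}) : p.height ≤ Nat.card ι := by
  have hv : LinearIndependent k ![b i₀, a i₀, x, y] := by
    refine linearIndependent_finCons.2 ⟨linearIndependent_vecCons_of_notMem hxy hxyp hap, ?_⟩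
    simpa only [Matrix.range_cons, Matrix.range_empty, Set.union_empty, Set.singleton_union]
  have hhom : ∀ j, (![b i₀, a i₀, x, y] j).IsHomogeneous 1 := Fin.forall_fin_succ.2
    ⟨hb i₀, Fin.forall_fin_succ.2 ⟨ha i₀, Fin.forall_fin_two.2 ⟨hx, hy⟩⟩⟩
  exact h.height_le_card_of_linearIndependent ha hb
    (v := ![b i₀, a i₀, x, y] ∘ (Sum.elim ![2, 3] ![1, 0] : Fin 2 ⊕ Fin 2 → Fin 4))
    (hv.comp _ (by decide)) (fun _ => hhom _) (l := 0) (r := .inl 1) (by simp) rfl rfl rfl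
    (Submodule.subset_span ⟨1, rfl⟩) hap

lemma height_le_card_of_coeff_notMem (hx : x.IsHomogeneous 1) (hy : y.IsHomogeneous 1)
    (ha : ∀ i, (a i).IsHomogeneous 1) (hb : ∀ i, (b i).IsHomogeneous 1)
    (h : IsColonPrime (Ideal.span (Set.range fun i => a i * x + b i * y)) p)
    (hxy : LinearIndependent k ![x, y]) (hxyp : ∀ i, ![x, y] i ∈ p) {i₀ : ι} (hap : a i₀ ∉ p) :
    p.height ≤ Nat.card ι := by
  by_cases hspan : b i₀ ∈ Submodule.span k {a i₀, x, y}
  · exact h.height_le_card_of_mem_span hx hy ha hb hxy hxyp hap hspan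
  · exact h.height_le_card_of_notMem_span hx hy ha hb hxy hxyp hap hspan

theorem height_le_card_of_ne (hx : x.IsHomogeneous 1) (hy : y.IsHomogeneous 1)
    (ha : ∀ i, (a i).IsHomogeneous 1) (hb : ∀ i, (b i).IsHomogeneous 1)
    (h : IsColonPrime (Ideal.span (Set.range fun i => a i * x + b i * y)) p)
    (hne : p ≠ Ideal.span ({x, y} ∪ Set.range a ∪ Set.range b)) : p.height ≤ Nat.card ι := by
  by_cases hxy : LinearIndependent k ![x, y]
  swap
  · exact h.height_le_card_of_not_linearIndependent ha hb hxy
  by_cases! hxyp : ∃ j, ![x, y] j ∉ p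
  · obtain ⟨j, hj⟩ := hxyp
    exact h.height_le_card_of_notMem_pair hx hy ha hb hxy hj
  by_cases! hap : ∃ i, a i ∉ p
  · obtain ⟨i, hi⟩ := hap
    exact h.height_le_card_of_coeff_notMem hx hy ha hb hxy hxyp hi
  by_cases! hbp : ∃ i, b i ∉ p
  · obtain ⟨i, hi⟩ := hbp
    simp only [add_comm (a _ * x)] at h
    exact h.height_le_card_of_coeff_notMem hy hx hb ha (LinearIndependent.pair_symm_iff.1 hxy)
      (Fin.forall_fin_two.2 ⟨hxyp 1, hxyp 0⟩) hi
  refine absurd (h.eq_span_of_subset ?_ ?_ ?_) hne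
  · rintro f (((rfl | rfl) | ⟨i, rfl⟩) | ⟨i, rfl⟩)
    exacts [hx, hy, ha i, hb i]
  · rintro _ ⟨i, rfl⟩
    refine add_mem (mul_mem ?_ ?_) (mul_mem ?_ ?_) <;> exact Algebra.subset_adjoin (by simp)
  · rintro f (((rfl | rfl) | ⟨i, rfl⟩) | ⟨i, rfl⟩)
    exacts [hxyp 0, hxyp 1, hap i, hbp i]

end IsColonPrime

end Quadrics

section Quadrics

variable {σ k ι κ : Type*} [Field k] {x y : MvPolynomial σ k} {a b : ι → MvPolynomial σ k}
  {z : κ → MvPolynomial σ k} {p : Ideal (MvPolynomial σ k)}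

theorem height_le_of_assoc_prime_quadrics_plus_linears_general [Finite σ] [Finite ι] [Finite κ]
    (hx : x.IsHomogeneous 1) (hy : y.IsHomogeneous 1) (ha : ∀ i, (a i).IsHomogeneous 1)
    (hb : ∀ i, (b i).IsHomogeneous 1) (hz : ∀ i, (z i).IsHomogeneous 1)
    (hp : IsAssociatedPrime p (MvPolynomial σ k ⧸
      Ideal.span (Set.range fun i => a i * x + b i * y) ⊔ Ideal.span (Set.range z)))
    (hne : p ≠ Ideal.span ({x, y} ∪ Set.range a ∪ Set.range b ∪ Set.range z)) :
    p.height ≤ Nat.card ι + Nat.card κ := by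
  obtain ⟨τ, _, Θ, hΘ, hker, hhom⟩ := exists_algHom_ker_eq_span_s14 (Set.forall_mem_range.2 hz)
  have h := IsColonPrime.of_isAssociatedPrime hp
  have hkerH : RingHom.ker Θ ≤ Ideal.span (Set.range fun i => a i * x + b i * y) ⊔
      Ideal.span (Set.range z) := hker.trans_le le_sup_right
  have hmap := h.map_of_surjective hΘ hkerH
  rw [map_sup_of_ker_eq hker, Ideal.map_span, ← Set.range_comp] at hmap
  simp only [Function.comp_def, map_add, map_mul] at hmap
  have hm : (Ideal.span ({x, y} ∪ Set.range a ∪ Set.range b ∪ Set.range z)).map Θ =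
      Ideal.span ({Θ x, Θ y} ∪ Set.range (Θ ∘ a) ∪ Set.range (Θ ∘ b)) := by
    rw [Ideal.span_union, map_sup_of_ker_eq hker, Ideal.map_span, Set.image_union,
      Set.image_union, Set.image_pair, Set.range_comp, Set.range_comp]
  have hmapne : p.map Θ ≠ Ideal.span ({Θ x, Θ y} ∪ Set.range (Θ ∘ a) ∪ Set.range (Θ ∘ b)) := by
    rw [← hm]
    exact (map_inj_of_ker_le hΘ (hkerH.trans h.le)
      (hker.trans_le (Ideal.span_mono Set.subset_union_right))).not.2 hne
  have hrank : ((RingHom.ker Θ).spanFinrank : ℕ∞) ≤ Nat.card κ := by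
    rw [hker]
    exact_mod_cast (Submodule.spanFinrank_span_le_ncard_of_finite (Set.finite_range z)).trans
      (Finite.card_range_le z)
  calc p.height ≤ (p.map Θ).height + (RingHom.ker Θ).spanFinrank :=
        h.height_le_height_map_add hΘ hkerH
    _ ≤ Nat.card ι + Nat.card κ := add_le_add (hmap.height_le_card_of_ne (hhom x hx) (hhom y hy)
        (fun i => hhom _ (ha i)) (fun i => hhom _ (hb i)) hmapne) hrank

end Quadrics

lemma heightENat_le_height {R : Type u} [CommRing R] (p : Ideal R) [hp : p.IsPrime] :
    p.heightENat ≤ p.height :=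
  (iInf₂_le (⟨p, hp⟩ : PrimeSpectrum R) le_rfl).trans (PrimeSpectrum.height_eq_orderHeight _).ge

/-- Let `x, y` be linearly independent linear forms, `q_1, …, q_s` quadrics
in `(x, y)` with `q_i = a_i x + b_i y`, and `z_1, …, z_u` (`u ≥ 1`) linear forms generating
an ideal of height at least `1`. Set `H = (q_1, …, q_s) + (z_1, …, z_u)` and
`m = (x, y, a_1, …, a_s, b_1, …, b_s, z_1, …, z_u)`. Then every associated prime `p ≠ m` of
`S/H` satisfies `height p ≤ s + u`. -/
theorem height_le_of_assoc_prime_quadrics_plus_linears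
    (k : Type u) [Field k] (N : ℕ) (s u' : ℕ) (hu : 1 ≤ u')
    (x y : MvPolynomial (Fin N) k)
    (hx : x.IsHomogeneous 1) (hy : y.IsHomogeneous 1)
    (hxy : LinearIndependent k ![x, y])
    (q a b : Fin s → MvPolynomial (Fin N) k)
    (hq2 : ∀ i, (q i).IsHomogeneous 2)
    (hqxy : ∀ i, q i ∈ Ideal.span ({x, y} : Set (MvPolynomial (Fin N) k)))
    (ha : ∀ i, (a i).IsHomogeneous 1) (hb : ∀ i, (b i).IsHomogeneous 1)
    (hqab : ∀ i, q i = a i * x + b i * y)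
    (z : Fin u' → MvPolynomial (Fin N) k)
    (hz : ∀ i, (z i).IsHomogeneous 1)
    (hzht : 1 ≤ (Ideal.span (Set.range z)).heightENat)
    (H : Ideal (MvPolynomial (Fin N) k))
    (hH : H = Ideal.span (Set.range q) ⊔ Ideal.span (Set.range z))
    (m : Ideal (MvPolynomial (Fin N) k))
    (hm : m = Ideal.span ({x, y} ∪ Set.range a ∪ Set.range b ∪ Set.range z))
    (p : Ideal (MvPolynomial (Fin N) k))
    (hp : IsAssociatedPrime p (MvPolynomial (Fin N) k ⧸ H))
    (hpm : p ≠ m) :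
    p.heightENat ≤ (s + u' : ℕ) := by
  have := hp.isPrime
  obtain rfl : q = fun i => a i * x + b i * y := funext hqab
  subst hH hm
  simpa using (heightENat_le_height p).trans
    (height_le_of_assoc_prime_quadrics_plus_linears_general hx hy ha hb hz hp hpm)
end
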